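/- arXiv:2012.12022 — 2 statements merged into one kernel-verified Lean document; each statement's English description precedes it below -/
import Mathlib

section
/- For every n ≥ 1 there exist constants C₁, C₂ > 0 depending only on n such that for all weakly decreasing λ, x ∈ ℝⁿ one has C₁·e^{⟨λ,x⟩}·V(λ)·V(x) ≤ A(λ,x)·∏_{1≤i<j≤n}(1+(λ_i−λ_j)(x_i−x_j)) ≤ C₂·e^{⟨λ,x⟩}·V(λ)·V(x). (Equivalently, for strictly decreasing λ, x the spherical function satisfies ψ_λ(x) ≍ e^{⟨λ,x⟩}/∏_{1≤i<j≤n}(1+(λ_i−λ_j)(x_i−x_j)) with constants depending only on n.) -/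
open Finset

/-- The alternating sum `A(ξ,x) = ∑_{σ ∈ Sₙ} sgn(σ) · exp(∑_k ξ_{σ(k)} x_k)`. -/
noncomputable def altSum {n : ℕ} (ξ x : Fin n → ℝ) : ℝ :=
  ∑ σ : Equiv.Perm (Fin n), ((Equiv.Perm.sign σ : ℤ) : ℝ) * Real.exp (∑ k, ξ (σ k) * x k)

/-- The Vandermonde product `V(x) = ∏_{1 ≤ i < j ≤ n} (x_i − x_j)`. -/
def vand {n : ℕ} (x : Fin n → ℝ) : ℝ :=
  ∏ i : Fin n, ∏ j ∈ Finset.Ioi i, (x i - x j)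

open MeasureTheory

/-- The increasing concave function `u ↦ u / (1 + a u)`, comparable to `min u a⁻¹`. -/
noncomputable def satur (a u : ℝ) : ℝ := u / (1 + a * u)

lemma satur_pos {a u : ℝ} (ha : 0 ≤ a) (hu : 0 < u) : 0 < satur a u := by
  unfold satur; positivity

lemma satur_nonneg {a u : ℝ} (ha : 0 ≤ a) (hu : 0 ≤ u) : 0 ≤ satur a u := by
  unfold satur; positivity

lemma satur_le_self {a u : ℝ} (ha : 0 ≤ a) (hu : 0 ≤ u) : satur a u ≤ u := by
  unfold satur
  exact div_le_self hu (by nlinarith [mul_nonneg ha hu])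

lemma satur_mul_le_one {a u : ℝ} (ha : 0 ≤ a) (hu : 0 ≤ u) : satur a u * a ≤ 1 := by
  have : 0 < 1 + a * u := by positivity
  unfold satur
  rw [div_mul_eq_mul_div, div_le_one this]
  nlinarith

lemma satur_le_mul_satur {a c u v : ℝ} (ha : 0 ≤ a) (hu : 0 ≤ u) (hv : 0 ≤ v) (hc : 1 ≤ c)
    (h : u ≤ c * v) : satur a u ≤ c * satur a v := by
  have h1 : 0 < 1 + a * u := by positivity
  have h2 : 0 < 1 + a * v := by positivity
  unfold satur
  rw [← mul_div_assoc, div_le_div_iff₀ h1 h2]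
  nlinarith [mul_nonneg (mul_nonneg ha hu) hv,
    mul_nonneg (mul_nonneg (mul_nonneg ha hu) hv) (sub_nonneg.2 hc)]

lemma satur_exchange {a b u d : ℝ} (ha : 0 ≤ a) (hb : 0 ≤ b) (hu : 0 < u) (hd : 0 < d) :
    satur a (u + satur b d) * satur (a + b) u ≤ 2 * (satur a u * satur (a + b) (u + d)) ∧
    satur a u * satur (a + b) (u + d) ≤
      2 * (satur a (u + satur b d) * satur (a + b) u) := by
  have e : satur a (u + satur b d) =
      (u + d + u * b * d) / (1 + b * d + a * (u + d + u * b * d)) := by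
    have : 0 < 1 + b * d := by positivity
    unfold satur
    field_simp
    ring_nf
  have h1 : 0 < 1 + b * d + a * (u + d + u * b * d) := by positivity
  have h2 : 0 < 1 + (a + b) * u := by positivity
  have h3 : 0 < 1 + a * u := by positivity
  have h4 : 0 < 1 + (a + b) * (u + d) := by positivity
  rw [e]
  unfold satur
  rw [div_mul_div_comm, div_mul_div_comm, ← mul_div_assoc, ← mul_div_assoc,
    div_le_div_iff₀ (by positivity) (by positivity),
    div_le_div_iff₀ (by positivity) (by positivity)]
  constructor
  · rw [← sub_nonneg]
    ring_nf
    positivity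
  · rw [← sub_nonneg]
    ring_nf
    positivity

lemma Fin.prod_Ioi_castSucc_eq {M : Type*} [CommMonoid M] {n : ℕ} (f : Fin (n + 1) → M)
    (i : Fin n) :
    ∏ j ∈ Finset.Ioi i.castSucc, f j = (∏ j ∈ Finset.Ioi i, f j.castSucc) * f (Fin.last n) := by
  have : Finset.Ioi i.castSucc =
      insert (Fin.last n) ((Finset.Ioi i).map Fin.castSuccEmb) := by
    rw [Fin.map_castSuccEmb_Ioi]
    ext k
    simp only [Finset.mem_Ioi, Finset.mem_insert, Finset.mem_Ioo]
    constructor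
    · intro h
      rcases (Fin.le_last k).eq_or_lt with h' | h'
      · exact Or.inl h'
      · exact Or.inr ⟨h, h'⟩
    · rintro (rfl | h)
      · exact Fin.castSucc_lt_last i
      · exact h.1
  rw [this, Finset.prod_insert (by simp), Finset.prod_map, mul_comm]
  rfl

lemma Fin.prod_Ioi_castSucc_eq_succ {M : Type*} [CommMonoid M] {n : ℕ} (f : Fin (n + 1) → M)
    (i : Fin n) :
    ∏ j ∈ Finset.Ioi i.castSucc, f j = f i.succ * ∏ j ∈ Finset.Ioi i, f j.succ := by
  have : Finset.Ioi i.castSucc = insert i.succ (Finset.Ioi i.succ) := by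
    ext k
    simp only [Finset.mem_Ioi, Finset.mem_insert, Fin.lt_def, Fin.ext_iff, Fin.val_castSucc,
      Fin.val_succ]
    omega
  rw [this, Finset.prod_insert (by simp), Fin.prod_Ioi_succ]

lemma Fin.prod_prod_Ioi_castSucc {M : Type*} [CommMonoid M] {n : ℕ}
    (f : Fin (n + 1) → Fin (n + 1) → M) :
    ∏ i, ∏ j ∈ Finset.Ioi i, f i j =
      (∏ i : Fin n, ∏ j ∈ Finset.Ioi i, f i.castSucc j.castSucc) *
        ∏ i : Fin n, f i.castSucc (Fin.last n) := by
  have h : Finset.Ioi (Fin.last n) = ∅ := by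
    ext k
    simp [Fin.le_last]
  rw [Fin.prod_univ_castSucc, h, Finset.prod_empty, mul_one, ← Finset.prod_mul_distrib]
  exact Finset.prod_congr rfl fun i _ => Fin.prod_Ioi_castSucc_eq _ i

/-- The product `∏_{i<j} (λ_i - λ_j) / (1 + (x_i - x_j) (λ_i - λ_j))`. -/
noncomputable def saturProd {n : ℕ} (lam x : Fin n → ℝ) : ℝ :=
  ∏ i : Fin n, ∏ j ∈ Finset.Ioi i, satur (x i - x j) (lam i - lam j)

lemma altSum_eq_det {n : ℕ} (ξ x : Fin n → ℝ) :
    altSum ξ x = (Matrix.of fun i j => Real.exp (ξ i * x j)).det := by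
  simp [altSum, Matrix.det_apply', Real.exp_sum]

lemma integral_exp_mul_Ioc {a b z : ℝ} (h : a ≤ b) :
    Real.exp (a * z) - Real.exp (b * z) =
      -(z * ∫ y in Set.Ioc a b, Real.exp (y * z)) := by
  rw [← intervalIntegral.integral_of_le h, ← intervalIntegral.integral_const_mul]
  have : ∀ y ∈ Set.uIcc a b,
      HasDerivAt (fun y => Real.exp (y * z)) (z * Real.exp (y * z)) y := by
    intro y _
    simpa [mul_comm] using ((hasDerivAt_id y).mul_const z).exp
  rw [intervalIntegral.integral_eq_sub_of_hasDerivAt this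
    (Continuous.intervalIntegrable (by fun_prop) _ _)]
  ring

/-- Lebesgue measure on the box of vectors `y` interlacing with `lam`. -/
noncomputable def interlaceMeasure {n : ℕ} (lam : Fin (n + 1) → ℝ) : Measure (Fin n → ℝ) :=
  Measure.pi fun i => volume.restrict (Set.Ioc (lam i.succ) (lam i.castSucc))

lemma ae_interlaceMeasure {n : ℕ} (lam : Fin (n + 1) → ℝ) :
    ∀ᵐ y ∂interlaceMeasure lam, ∀ i, y i ∈ Set.Ioc (lam i.succ) (lam i.castSucc) := by
  rw [ae_all_iff]
  intro i
  exact (Measure.tendsto_eval_ae_ae (i := i)).eventually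
    (ae_restrict_mem (measurableSet_Ioc : MeasurableSet (Set.Ioc (lam i.succ) (lam i.castSucc))))

lemma integrable_exp_interlace {n : ℕ} (lam : Fin (n + 1) → ℝ) (z : Fin n → ℝ)
    (σ : Equiv.Perm (Fin n)) :
    Integrable (fun y : Fin n → ℝ => ∏ k, Real.exp (y k * z (σ k))) (interlaceMeasure lam) :=
  Integrable.fintype_prod (f := fun k t => Real.exp (t * z (σ k))) fun _ =>
    (Continuous.integrableOn_Icc (by fun_prop)).mono_set Set.Ioc_subset_Icc_self

lemma altSum_eq_sum_prod {n : ℕ} (y z : Fin n → ℝ) :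
    altSum y z = ∑ σ : Equiv.Perm (Fin n),
      ((Equiv.Perm.sign σ : ℤ) : ℝ) * ∏ k, Real.exp (y k * z (σ k)) := by
  rw [altSum_eq_det, ← Matrix.det_transpose, Matrix.det_apply']
  rfl

lemma integrable_altSum {n : ℕ} (lam : Fin (n + 1) → ℝ) (z : Fin n → ℝ) :
    Integrable (fun y => altSum y z) (interlaceMeasure lam) := by
  simp_rw [altSum_eq_sum_prod]
  exact integrable_finsetSum _ fun σ _ => (integrable_exp_interlace lam z σ).const_mul _

lemma integral_altSum {n : ℕ} (lam : Fin (n + 1) → ℝ) (z : Fin n → ℝ) :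
    ∫ y, altSum y z ∂interlaceMeasure lam =
      (Matrix.of fun i j : Fin n =>
        ∫ y in Set.Ioc (lam i.succ) (lam i.castSucc), Real.exp (y * z j)).det := by
  simp_rw [altSum_eq_sum_prod]
  rw [integral_finsetSum _ fun σ _ => (integrable_exp_interlace lam z σ).const_mul _,
    ← Matrix.det_transpose, Matrix.det_apply']
  refine Finset.sum_congr rfl fun σ _ => ?_
  rw [integral_const_mul, interlaceMeasure,
    integral_fintype_prod_eq_prod (fun k t => Real.exp (t * z (σ k)))]
  rfl

lemma altSum_succ {n : ℕ} {lam : Fin (n + 1) → ℝ} (hlam : Antitone lam) (x : Fin (n + 1) → ℝ) :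
    altSum lam x = Real.exp (x (Fin.last n) * ∑ i, lam i) *
      ((∏ j : Fin n, (x j.castSucc - x (Fin.last n))) *
        ∫ y, altSum y (fun j : Fin n => x j.castSucc - x (Fin.last n))
          ∂interlaceMeasure lam) := by
  set z : Fin n → ℝ := fun j => x j.castSucc - x (Fin.last n) with hz
  set N : Matrix (Fin (n + 1)) (Fin (n + 1)) ℝ :=
    Matrix.of fun i j => Real.exp (lam i * (x j - x (Fin.last n))) with hN
  set B : Matrix (Fin (n + 1)) (Fin (n + 1)) ℝ :=
    Matrix.of fun i j => Fin.cases (N 0 j) (fun k => N k.succ j - N k.castSucc j) i with hB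
  have h1 : altSum lam x = Real.exp (x (Fin.last n) * ∑ i, lam i) * N.det := by
    have e := Matrix.det_mul_column (fun i => Real.exp (x (Fin.last n) * lam i)) N
    rw [← Real.exp_sum, ← Finset.mul_sum] at e
    rw [← e, altSum_eq_det]
    congr 1
    ext i j
    simp only [hN, Matrix.of_apply, ← Real.exp_add]
    ring_nf
  have h2 : N.det = B.det := by
    refine Matrix.det_eq_of_forall_row_eq_smul_add_pred (fun _ => 1) (fun j => ?_)
      (fun i j => ?_)
    · simp [hB]
    · simp [hB]
  have h3 : B.det = (-1) ^ n * (B.submatrix Fin.succ Fin.castSucc).det := by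
    rw [Matrix.det_succ_column B (Fin.last n), Fin.sum_univ_succ, Finset.sum_eq_zero]
    · simp [hB, hN]
    · intro k _
      simp [hB, hN]
  have h4 : (B.submatrix Fin.succ Fin.castSucc).det =
      (-1) ^ n * ((∏ j : Fin n, z j) * ∫ y, altSum y z ∂interlaceMeasure lam) := by
    rw [integral_altSum, ← Matrix.det_mul_row]
    have := Matrix.det_neg (Matrix.of fun i j : Fin n => z j * (Matrix.of fun i j : Fin n =>
        ∫ y in Set.Ioc (lam i.succ) (lam i.castSucc), Real.exp (y * z j)) i j)
    rw [Fintype.card_fin] at this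
    rw [← this]
    congr 1
    ext i j
    simp only [hB, hN, Matrix.submatrix_apply, Matrix.of_apply, Fin.cases_succ, Matrix.neg_apply]
    exact integral_exp_mul_Ioc (hlam (Fin.castSucc_le_succ i))
  rw [h1, h2, h3, h4, ← mul_assoc ((-1 : ℝ) ^ n), ← mul_pow]
  simp

/-- The scale on which `y_j` ranges below `lam_j` in the integral of `altSum_succ`. -/
noncomputable def width {n : ℕ} (lam x : Fin (n + 1) → ℝ) (j : Fin n) : ℝ :=
  satur (x j.castSucc - x (Fin.last n)) (lam j.castSucc - lam j.succ)

/-- The typical size of the factor `saturProd y x` in the integral of `altSum_succ`. -/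
noncomputable def spreadProd {n : ℕ} (lam x : Fin (n + 1) → ℝ) : ℝ :=
  ∏ i : Fin n, ∏ j ∈ Finset.Ioi i,
    satur (x i.castSucc - x j.castSucc) (lam i.castSucc - lam j.castSucc + width lam x j)

/-- The power of `c` whose exponent is the number of pairs `i < j` in `Fin n`. -/
def pairConst (n : ℕ) (c : ℝ) : ℝ := ∏ i : Fin n, ∏ _j ∈ Finset.Ioi i, c

lemma pairConst_pos (n : ℕ) {c : ℝ} (hc : 0 < c) : 0 < pairConst n c :=
  Finset.prod_pos fun _ _ => Finset.prod_pos fun _ _ => hc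

section

variable {n : ℕ}

lemma prod_prod_Ioi_le {f g : Fin n → Fin n → ℝ} (hf : ∀ i j, i < j → 0 ≤ f i j)
    (hfg : ∀ i j, i < j → f i j ≤ g i j) :
    ∏ i, ∏ j ∈ Finset.Ioi i, f i j ≤ ∏ i, ∏ j ∈ Finset.Ioi i, g i j :=
  Finset.prod_le_prod
    (fun i _ => Finset.prod_nonneg fun j hj => hf i j (Finset.mem_Ioi.1 hj))
    fun i _ => Finset.prod_le_prod (fun j hj => hf i j (Finset.mem_Ioi.1 hj))
      fun j hj => hfg i j (Finset.mem_Ioi.1 hj)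

lemma prod_prod_Ioi_nonneg {f : Fin n → Fin n → ℝ} (hf : ∀ i j, i < j → 0 ≤ f i j) :
    0 ≤ ∏ i, ∏ j ∈ Finset.Ioi i, f i j :=
  Finset.prod_nonneg fun i _ => Finset.prod_nonneg fun j hj => hf i j (Finset.mem_Ioi.1 hj)

lemma width_pos {lam x : Fin (n + 1) → ℝ} (hlam : StrictAnti lam) (hx : Antitone x) (j : Fin n) :
    0 < width lam x j :=
  satur_pos (sub_nonneg.2 (hx (Fin.le_last _))) (sub_pos.2 (hlam Fin.castSucc_lt_succ))

lemma spreadProd_nonneg {lam x : Fin (n + 1) → ℝ} (hlam : StrictAnti lam) (hx : Antitone x) :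
    0 ≤ spreadProd lam x :=
  prod_prod_Ioi_nonneg fun i j hij => satur_nonneg
    (sub_nonneg.2 (hx (Fin.castSucc_le_castSucc_iff.2 hij.le)))
    (add_nonneg (sub_nonneg.2 (hlam.antitone (Fin.castSucc_le_castSucc_iff.2 hij.le)))
      (width_pos hlam hx j).le)

lemma saturProd_nonneg {lam x : Fin n → ℝ} (hlam : Antitone lam) (hx : Antitone x) :
    0 ≤ saturProd lam x :=
  prod_prod_Ioi_nonneg fun _ _ hij =>
    satur_nonneg (sub_nonneg.2 (hx hij.le)) (sub_nonneg.2 (hlam hij.le))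

lemma vand_nonneg {x : Fin n → ℝ} (hx : Antitone x) : 0 ≤ vand x :=
  prod_prod_Ioi_nonneg fun _ _ hij => sub_nonneg.2 (hx hij.le)

lemma prod_width_mul_spreadProd_comparable {lam x : Fin (n + 1) → ℝ} (hlam : StrictAnti lam)
    (hx : Antitone x) :
    (∏ j, width lam x j) * spreadProd lam x ≤ pairConst n 2 * saturProd lam x ∧
    saturProd lam x ≤ pairConst n 2 * ((∏ j, width lam x j) * spreadProd lam x) := by
  let T : ℝ := ∏ i : Fin n, ∏ j ∈ Finset.Ioi i,
    satur (x i.castSucc - x (Fin.last n)) (lam i.castSucc - lam j.castSucc)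
  let S : ℝ := ∏ i : Fin n, ∏ j ∈ Finset.Ioi i,
    satur (x i.castSucc - x (Fin.last n)) (lam i.castSucc - lam j.succ)
  let Q : ℝ := ∏ i : Fin n, ∏ j ∈ Finset.Ioi i,
    satur (x i.castSucc - x j.castSucc) (lam i.castSucc - lam j.castSucc)
  let E : ℝ := ∏ i : Fin n,
    satur (x i.castSucc - x (Fin.last n)) (lam i.castSucc - lam (Fin.last n))
  have hT : 0 < T := Finset.prod_pos fun i _ => Finset.prod_pos fun j hj =>
    satur_pos (sub_nonneg.2 (hx (Fin.le_last _)))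
      (sub_pos.2 (hlam (Fin.castSucc_lt_castSucc_iff.2 (Finset.mem_Ioi.1 hj))))
  have hW : 0 < ∏ j, width lam x j := Finset.prod_pos fun j _ => width_pos hlam hx j
  have hsplit : saturProd lam x = Q * E := Fin.prod_prod_Ioi_castSucc _
  have htel : (∏ j, width lam x j) * S = T * E := by
    simp only [S, T, E, ← Finset.prod_mul_distrib]
    refine Finset.prod_congr rfl fun i _ => ?_
    exact (Fin.prod_Ioi_castSucc_eq_succ (fun k => satur (x i.castSucc - x (Fin.last n))
      (lam i.castSucc - lam k)) i).symm.trans (Fin.prod_Ioi_castSucc_eq _ i)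
  have key : ∀ i j : Fin n, i < j → _ := fun i j hij =>
    satur_exchange (a := x i.castSucc - x j.castSucc) (b := x j.castSucc - x (Fin.last n))
      (u := lam i.castSucc - lam j.castSucc) (d := lam j.castSucc - lam j.succ)
      (sub_nonneg.2 (hx (Fin.castSucc_le_castSucc_iff.2 hij.le)))
      (sub_nonneg.2 (hx (Fin.le_last _)))
      (sub_pos.2 (hlam (Fin.castSucc_lt_castSucc_iff.2 hij)))
      (sub_pos.2 (hlam Fin.castSucc_lt_succ))
  simp only [sub_add_sub_cancel] at key
  have hpos : ∀ i j : Fin n, i < j → 0 ≤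
      satur (x i.castSucc - x j.castSucc) (lam i.castSucc - lam j.castSucc + width lam x j) :=
    fun i j hij => satur_nonneg
      (sub_nonneg.2 (hx (Fin.castSucc_le_castSucc_iff.2 hij.le)))
      (add_nonneg (sub_nonneg.2 (hlam.antitone (Fin.castSucc_le_castSucc_iff.2 hij.le)))
        (width_pos hlam hx j).le)
  have h1 : spreadProd lam x * T ≤ pairConst n 2 * (Q * S) := by
    simp only [spreadProd, T, pairConst, Q, S, ← Finset.prod_mul_distrib]
    refine prod_prod_Ioi_le (fun i j hij => mul_nonneg (hpos i j hij) ?_)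
      fun i j hij => (key i j hij).1
    exact satur_nonneg (sub_nonneg.2 (hx (Fin.le_last _)))
      (sub_nonneg.2 (hlam.antitone (Fin.castSucc_le_castSucc_iff.2 hij.le)))
  have h2 : Q * S ≤ pairConst n 2 * (spreadProd lam x * T) := by
    simp only [spreadProd, T, pairConst, Q, S, ← Finset.prod_mul_distrib]
    refine prod_prod_Ioi_le (fun i j hij => mul_nonneg ?_ ?_)
      fun i j hij => (key i j hij).2
    · exact satur_nonneg (sub_nonneg.2 (hx (Fin.castSucc_le_castSucc_iff.2 hij.le)))
        (sub_nonneg.2 (hlam.antitone (Fin.castSucc_le_castSucc_iff.2 hij.le)))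
    · exact satur_nonneg (sub_nonneg.2 (hx (Fin.le_last _)))
        (sub_nonneg.2 (hlam.antitone (Fin.le_def.2 (by
          have := Fin.lt_def.1 hij
          simp only [Fin.val_castSucc, Fin.val_succ]
          omega))))
  have hQS : (∏ j, width lam x j) * (Q * S) = saturProd lam x * T := by
    rw [hsplit]
    linear_combination Q * htel
  constructor
  · refine le_of_mul_le_mul_right ?_ hT
    have := mul_le_mul_of_nonneg_left h1 hW.le
    linear_combination this + pairConst n 2 * hQS
  · refine le_of_mul_le_mul_right ?_ hT
    have := mul_le_mul_of_nonneg_left h2 hW.le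
    linear_combination this - hQS

lemma exp_neg_mul_pow_le (n : ℕ) {s : ℝ} (hs : 0 ≤ s) :
    Real.exp (-s) * (2 + s) ^ n ≤ (Nat.factorial (n + 2) * Real.exp 2) / (1 + s) ^ 2 := by
  have h1 : (2 + s) ^ (n + 2) ≤ Nat.factorial (n + 2) * Real.exp (2 + s) := by
    have := Real.pow_div_factorial_le_exp (2 + s) (by positivity) (n + 2)
    rwa [div_le_iff₀' (by positivity)] at this
  rw [le_div_iff₀ (by positivity)]
  calc Real.exp (-s) * (2 + s) ^ n * (1 + s) ^ 2
      ≤ Real.exp (-s) * (2 + s) ^ n * (2 + s) ^ 2 := by gcongr; norm_num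
    _ = Real.exp (-s) * (2 + s) ^ (n + 2) := by ring
    _ ≤ Real.exp (-s) * (Nat.factorial (n + 2) * Real.exp (2 + s)) := by gcongr
    _ = Nat.factorial (n + 2) * (Real.exp (-s) * Real.exp (2 + s)) := by ring
    _ = _ := by rw [← Real.exp_add]; ring_nf

lemma integral_one_div_sq {a b z : ℝ} (h : a ≤ b) (hz : 0 ≤ z) :
    ∫ y in Set.Ioc a b, 1 / (1 + (b - y) * z) ^ 2 = satur z (b - a) := by
  rw [← intervalIntegral.integral_of_le h]
  have hpos : ∀ y ∈ Set.uIcc a b, 0 < 1 + (b - y) * z := by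
    intro y hy
    rw [Set.uIcc_of_le h] at hy
    have := mul_nonneg (sub_nonneg.2 hy.2) hz
    linarith
  have hd : ∀ y ∈ Set.uIcc a b,
      HasDerivAt (fun y => -((b - y) / (1 + (b - y) * z))) (1 / (1 + (b - y) * z) ^ 2) y := by
    intro y hy
    have h1 : HasDerivAt (fun y => b - y) (-1) y := (hasDerivAt_id y).const_sub b
    have h2 : HasDerivAt (fun y => 1 + (b - y) * z) (-1 * z) y := (h1.mul_const z).const_add 1
    have h3 := (h1.div h2 (hpos y hy).ne').neg
    refine h3.congr_deriv ?_
    have := (hpos y hy).ne'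
    field_simp
    ring
  rw [intervalIntegral.integral_eq_sub_of_hasDerivAt hd]
  · simp [satur, mul_comm]
  · refine ContinuousOn.intervalIntegrable ?_
    refine ContinuousOn.div (by fun_prop) (by fun_prop) fun y hy => ?_
    exact (pow_pos (hpos y hy) 2).ne'

lemma integrableOn_one_div_sq {a b z : ℝ} (hz : 0 ≤ z) :
    IntegrableOn (fun y => 1 / (1 + (b - y) * z) ^ 2) (Set.Ioc a b) := by
  refine (ContinuousOn.integrableOn_Icc ?_).mono_set Set.Ioc_subset_Icc_self
  refine ContinuousOn.div (by fun_prop) (by fun_prop) fun y hy => ?_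
  have := mul_nonneg (sub_nonneg.2 hy.2) hz
  positivity

lemma antitone_of_interlace {lam : Fin (n + 1) → ℝ} (hlam : Antitone lam) {y : Fin n → ℝ}
    (hy : ∀ i, y i ∈ Set.Ioc (lam i.succ) (lam i.castSucc)) : Antitone y := by
  intro i j hij
  rcases hij.eq_or_lt with rfl | hij
  · exact le_rfl
  · refine (hy j).2.trans ((hlam ?_).trans (hy i).1.le)
    rw [Fin.le_def, Fin.val_succ, Fin.val_castSucc]
    exact hij

lemma exp_sum_eq_mul_prod (lam : Fin (n + 1) → ℝ) (y z : Fin n → ℝ) :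
    Real.exp (∑ k, y k * z k) = Real.exp (∑ k, lam k.castSucc * z k) *
      ∏ k, Real.exp (-((lam k.castSucc - y k) * z k)) := by
  rw [← Real.exp_sum, ← Real.exp_add, ← Finset.sum_add_distrib]
  congr 1
  exact Finset.sum_congr rfl fun _ _ => by ring

lemma exp_mul_saturProd_le {lam x : Fin (n + 1) → ℝ} (hlam : StrictAnti lam) (hx : Antitone x)
    {y : Fin n → ℝ} (hy : ∀ i, y i ∈ Set.Ioc (lam i.succ) (lam i.castSucc)) {z : Fin n → ℝ}
    (hz : z = fun j : Fin n => x j.castSucc - x (Fin.last n)) :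
    Real.exp (∑ k, y k * z k) * saturProd y z ≤
      Real.exp (∑ k, lam k.castSucc * z k) * spreadProd lam x *
        ∏ k, ((Nat.factorial (n + 2) * Real.exp 2) *
          (1 / (1 + (lam k.castSucc - y k) * z k) ^ 2)) := by
  have hz0 : ∀ k, 0 ≤ z k := fun k => by
    rw [hz]; exact sub_nonneg.2 (hx (Fin.le_last _))
  have ht0 : ∀ k, 0 ≤ lam k.castSucc - y k := fun k => sub_nonneg.2 (hy k).2
  have hs0 : ∀ k, 0 ≤ (lam k.castSucc - y k) * z k := fun k => mul_nonneg (ht0 k) (hz0 k)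
  have hyA := antitone_of_interlace hlam.antitone hy
  have h1 : saturProd y z ≤
      (∏ k, (2 + (lam k.castSucc - y k) * z k) ^ n) * spreadProd lam x := by
    have h2 : saturProd y z ≤ (∏ i : Fin n, ∏ j ∈ Finset.Ioi i,
        (2 + (lam j.castSucc - y j) * z j)) * spreadProd lam x := by
      simp only [saturProd, spreadProd, ← Finset.prod_mul_distrib]
      have hzz : ∀ i j, z i - z j = x i.castSucc - x j.castSucc := fun i j => by simp [hz]
      have hxx : ∀ i j : Fin n, i < j → 0 ≤ x i.castSucc - x j.castSucc := fun i j hij =>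
        sub_nonneg.2 (hx (Fin.castSucc_le_castSucc_iff.2 hij.le))
      refine prod_prod_Ioi_le (fun i j hij => ?_) fun i j hij => ?_
      · rw [hzz]
        exact satur_nonneg (hxx i j hij) (sub_nonneg.2 (hyA hij.le))
      · rw [hzz]
        have hl : 0 ≤ lam i.castSucc - lam j.castSucc :=
          sub_nonneg.2 (hlam.antitone (Fin.castSucc_le_castSucc_iff.2 hij.le))
        have hw := width_pos hlam hx j
        refine satur_le_mul_satur (hxx i j hij) (sub_nonneg.2 (hyA hij.le)) (by positivity)
          (by linarith [hs0 j]) ?_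
        have hd : 0 < lam j.castSucc - lam j.succ := sub_pos.2 (hlam Fin.castSucc_lt_succ)
        have htw : lam j.castSucc - y j ≤
            (2 + (lam j.castSucc - y j) * z j) * width lam x j := by
          have hzj : x j.castSucc - x (Fin.last n) = z j := by rw [hz]
          have hp : 0 < 1 + z j * (lam j.castSucc - lam j.succ) := by
            have := hz0 j
            positivity
          rw [width, satur, hzj, ← mul_div_assoc, le_div_iff₀ hp]
          linarith [(hy j).1]
        have := mul_nonneg (hs0 j) hl
        linarith [(hy i).2]
    refine h2.trans (mul_le_mul_of_nonneg_right ?_ (spreadProd_nonneg hlam hx))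
    have h3 : ∏ k, (2 + (lam k.castSucc - y k) * z k) ^ n =
        ∏ _i : Fin n, ∏ j : Fin n, (2 + (lam j.castSucc - y j) * z j) := by
      rw [Finset.prod_const, Finset.card_univ, Fintype.card_fin, Finset.prod_pow]
    rw [h3]
    refine Finset.prod_le_prod (fun i _ => Finset.prod_nonneg fun j _ => by linarith [hs0 j])
      fun i _ => ?_
    exact Finset.prod_le_prod_of_subset_of_one_le (Finset.subset_univ _)
      (fun j _ => by linarith [hs0 j]) (fun j _ _ => by linarith [hs0 j])
  rw [exp_sum_eq_mul_prod lam y z]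
  have h4 : (∏ k, Real.exp (-((lam k.castSucc - y k) * z k))) *
      (∏ k, (2 + (lam k.castSucc - y k) * z k) ^ n) ≤
      ∏ k, ((Nat.factorial (n + 2) * Real.exp 2) *
          (1 / (1 + (lam k.castSucc - y k) * z k) ^ 2)) := by
    rw [← Finset.prod_mul_distrib]
    refine Finset.prod_le_prod (fun k _ => ?_) fun k _ => ?_
    · have := hs0 k
      positivity
    · rw [mul_one_div]
      exact exp_neg_mul_pow_le n (hs0 k)
  have hE := Finset.prod_nonneg (s := Finset.univ) (f := fun k =>
    Real.exp (-((lam k.castSucc - y k) * z k))) fun k _ => (Real.exp_pos _).le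
  have h5 := mul_le_mul_of_nonneg_left h1 hE
  have h6 := mul_le_mul_of_nonneg_right h4 (spreadProd_nonneg hlam hx)
  have h7 : (∏ k, Real.exp (-((lam k.castSucc - y k) * z k))) * saturProd y z ≤
      spreadProd lam x * ∏ k, ((Nat.factorial (n + 2) * Real.exp 2) *
          (1 / (1 + (lam k.castSucc - y k) * z k) ^ 2)) := by linarith
  have := mul_le_mul_of_nonneg_left h7 (Real.exp_pos (∑ k, lam k.castSucc * z k)).le
  linarith

lemma le_exp_mul_saturProd {lam x : Fin (n + 1) → ℝ} (hlam : StrictAnti lam) (hx : Antitone x)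
    {y : Fin n → ℝ} (hy : ∀ i, y i ∈ Set.Ioc (lam i.castSucc - width lam x i / 2)
      (lam i.castSucc - width lam x i / 4)) {z : Fin n → ℝ}
    (hz : z = fun j : Fin n => x j.castSucc - x (Fin.last n)) :
    Real.exp (∑ k, lam k.castSucc * z k) * (pairConst n (1 / 4) * spreadProd lam x) *
        Real.exp (-1) ^ n ≤ Real.exp (∑ k, y k * z k) * saturProd y z := by
  have hz0 : ∀ k, 0 ≤ z k := fun k => by
    rw [hz]; exact sub_nonneg.2 (hx (Fin.le_last _))
  have hd : ∀ j : Fin n, 0 < lam j.castSucc - lam j.succ := fun j =>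
    sub_pos.2 (hlam Fin.castSucc_lt_succ)
  have hwd : ∀ j, width lam x j ≤ lam j.castSucc - lam j.succ := fun j =>
    satur_le_self (sub_nonneg.2 (hx (Fin.le_last _))) (hd j).le
  have h1 : pairConst n (1 / 4) * spreadProd lam x ≤ saturProd y z := by
    simp only [saturProd, spreadProd, pairConst, ← Finset.prod_mul_distrib]
    have hzz : ∀ i j, z i - z j = x i.castSucc - x j.castSucc := fun i j => by simp [hz]
    have hxx : ∀ i j : Fin n, i < j → 0 ≤ x i.castSucc - x j.castSucc := fun i j hij =>
      sub_nonneg.2 (hx (Fin.castSucc_le_castSucc_iff.2 hij.le))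
    have hl : ∀ i j : Fin n, i < j → 0 ≤ lam i.castSucc - lam j.castSucc := fun i j hij =>
      sub_nonneg.2 (hlam.antitone (Fin.castSucc_le_castSucc_iff.2 hij.le))
    refine prod_prod_Ioi_le (fun i j hij => ?_) fun i j hij => ?_
    · exact mul_nonneg (by norm_num) (satur_nonneg (hxx i j hij)
        (add_nonneg (hl i j hij) (width_pos hlam hx j).le))
    · rw [hzz]
      have hw := width_pos hlam hx j
      have hlij := hl i j hij
      have hij' : lam j.castSucc ≤ lam i.succ := hlam.antitone (by
        rw [Fin.le_def, Fin.val_succ, Fin.val_castSucc]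
        exact hij)
      have hsub : lam i.castSucc - lam j.castSucc + width lam x j ≤ 4 * (y i - y j) := by
        linarith [(hy i).1, (hy j).2, hwd i]
      have := satur_le_mul_satur (c := 4) (hxx i j hij) (by positivity)
        (v := y i - y j) (by linarith) (by norm_num) hsub
      linarith
  have h2 : Real.exp (-1) ^ n ≤ ∏ k, Real.exp (-((lam k.castSucc - y k) * z k)) := by
    have : Real.exp (-1) ^ n = ∏ _k : Fin n, Real.exp (-1) := by simp
    rw [this]
    refine Finset.prod_le_prod (fun k _ => (Real.exp_pos _).le) fun k _ => ?_
    rw [Real.exp_le_exp, neg_le_neg_iff]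
    have hw1 : width lam x k * z k ≤ 1 := by
      rw [hz]
      exact satur_mul_le_one (sub_nonneg.2 (hx (Fin.le_last _))) (hd k).le
    have hw := width_pos hlam hx k
    refine le_trans (mul_le_mul_of_nonneg_right ?_ (hz0 k)) hw1
    linarith [(hy k).1]
  rw [exp_sum_eq_mul_prod lam y z, mul_assoc (Real.exp _), mul_assoc (Real.exp _)]
  refine mul_le_mul_of_nonneg_left ?_ (Real.exp_pos _).le
  rw [mul_comm]
  refine mul_le_mul h2 h1 (mul_nonneg (pairConst_pos n (by norm_num)).le
    (spreadProd_nonneg hlam hx)) (Finset.prod_nonneg fun k _ => (Real.exp_pos _).le)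

end

/-- `A(λ,x) ≍ e^{⟨λ,x⟩} V(x) ∏_{i<j} (λ_i - λ_j) / (1 + (λ_i - λ_j) (x_i - x_j))` with constants
`C₁` and `C₂`. -/
def AltSumEstimate (n : ℕ) (C₁ C₂ : ℝ) : Prop :=
  ∀ lam x : Fin n → ℝ, Antitone lam → Antitone x →
    C₁ * (vand x * (Real.exp (∑ k, lam k * x k) * saturProd lam x)) ≤ altSum lam x ∧
    altSum lam x ≤ C₂ * (vand x * (Real.exp (∑ k, lam k * x k) * saturProd lam x))

section

variable {n : ℕ} {lam x : Fin (n + 1) → ℝ} {z : Fin n → ℝ} {C₁ C₂ : ℝ}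

lemma integral_altSum_le (hC : 0 ≤ C₂) (h : AltSumEstimate n C₁ C₂) (hlam : StrictAnti lam)
    (hx : Antitone x) (hz : z = fun j : Fin n => x j.castSucc - x (Fin.last n)) :
    ∫ y, altSum y z ∂interlaceMeasure lam ≤
      C₂ * (Nat.factorial (n + 2) * Real.exp 2) ^ n *
        (vand z * Real.exp (∑ k, lam k.castSucc * z k) *
          ((∏ k, width lam x k) * spreadProd lam x)) := by
  have hzA : Antitone z := by
    intro i j hij
    rw [hz]
    exact sub_le_sub_right (hx (Fin.castSucc_le_castSucc_iff.2 hij)) _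
  have hz0 : ∀ k, 0 ≤ z k := fun k => by
    rw [hz]; exact sub_nonneg.2 (hx (Fin.le_last _))
  let g : Fin n → ℝ → ℝ := fun k t => (Nat.factorial (n + 2) * Real.exp 2) *
    (1 / (1 + (lam k.castSucc - t) * z k) ^ 2)
  have hint : Integrable (fun y : Fin n → ℝ => ∏ k, g k (y k)) (interlaceMeasure lam) :=
    Integrable.fintype_prod fun k => (integrableOn_one_div_sq (hz0 k)).const_mul _
  have hval : ∫ y, ∏ k, g k (y k) ∂interlaceMeasure lam =
      (Nat.factorial (n + 2) * Real.exp 2) ^ n * ∏ k, width lam x k := by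
    rw [interlaceMeasure, integral_fintype_prod_eq_prod g]
    have : ∀ k, ∫ t in Set.Ioc (lam k.succ) (lam k.castSucc), g k t =
        (Nat.factorial (n + 2) * Real.exp 2) * width lam x k := by
      intro k
      simp only [g]
      rw [integral_const_mul, integral_one_div_sq (hlam.antitone (Fin.castSucc_le_succ k)) (hz0 k),
        width, hz]
    simp_rw [this]
    rw [Finset.prod_mul_distrib]
    simp
  have hmono : ∫ y, altSum y z ∂interlaceMeasure lam ≤
      ∫ y, (C₂ * (vand z * (Real.exp (∑ k, lam k.castSucc * z k) * spreadProd lam x))) *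
        ∏ k, g k (y k) ∂interlaceMeasure lam := by
    refine integral_mono_ae (integrable_altSum lam z) (hint.const_mul _) ?_
    filter_upwards [ae_interlaceMeasure lam] with y hy
    refine (h y z (antitone_of_interlace hlam.antitone hy) hzA).2.trans ?_
    have := mul_le_mul_of_nonneg_left (exp_mul_saturProd_le hlam hx hy hz)
      (mul_nonneg hC (vand_nonneg hzA))
    simp only [g]
    linarith
  refine hmono.trans_eq ?_
  rw [integral_const_mul, hval]
  ring

lemma le_integral_altSum (hC : 0 ≤ C₁) (h : AltSumEstimate n C₁ C₂) (hlam : StrictAnti lam)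
    (hx : Antitone x) (hz : z = fun j : Fin n => x j.castSucc - x (Fin.last n)) :
    C₁ * (pairConst n (1 / 4) * Real.exp (-1) ^ n * (1 / 4) ^ n) *
        (vand z * Real.exp (∑ k, lam k.castSucc * z k) *
          ((∏ k, width lam x k) * spreadProd lam x)) ≤
      ∫ y, altSum y z ∂interlaceMeasure lam := by
  have hzA : Antitone z := by
    intro i j hij
    rw [hz]
    exact sub_le_sub_right (hx (Fin.castSucc_le_castSucc_iff.2 hij)) _
  let s : Fin n → Set ℝ := fun k =>
    Set.Ioc (lam k.castSucc - width lam x k / 2) (lam k.castSucc - width lam x k / 4)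
  let g : Fin n → ℝ → ℝ := fun k => (s k).indicator 1
  have hs : ∀ k, s k ⊆ Set.Ioc (lam k.succ) (lam k.castSucc) := by
    intro k
    have hw := width_pos hlam hx k
    have hwd : width lam x k ≤ lam k.castSucc - lam k.succ :=
      satur_le_self (sub_nonneg.2 (hx (Fin.le_last _)))
        (sub_nonneg.2 (hlam.antitone (Fin.castSucc_le_succ k)))
    exact Set.Ioc_subset_Ioc (by linarith) (by linarith)
  have hint : Integrable (fun y : Fin n → ℝ => ∏ k, g k (y k)) (interlaceMeasure lam) :=
    Integrable.fintype_prod fun k => (integrable_const (1 : ℝ)).indicator measurableSet_Ioc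
  have hval : ∫ y, ∏ k, g k (y k) ∂interlaceMeasure lam =
      (1 / 4) ^ n * ∏ k, width lam x k := by
    rw [interlaceMeasure, integral_fintype_prod_eq_prod g]
    have : ∀ k, ∫ t in Set.Ioc (lam k.succ) (lam k.castSucc), g k t =
        (1 / 4) * width lam x k := by
      intro k
      have hw := width_pos hlam hx k
      simp only [g]
      rw [integral_indicator_one measurableSet_Ioc, measureReal_restrict_apply measurableSet_Ioc,
        Set.inter_eq_self_of_subset_left (hs k), Real.volume_real_Ioc_of_le (by linarith)]
      ring
    simp_rw [this]
    rw [Finset.prod_mul_distrib]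
    simp
  have hmono : ∫ y, (C₁ * (vand z * (Real.exp (∑ k, lam k.castSucc * z k) *
        (pairConst n (1 / 4) * spreadProd lam x) * Real.exp (-1) ^ n))) *
        ∏ k, g k (y k) ∂interlaceMeasure lam ≤ ∫ y, altSum y z ∂interlaceMeasure lam := by
    refine integral_mono_ae (hint.const_mul _) (integrable_altSum lam z) ?_
    filter_upwards [ae_interlaceMeasure lam] with y hy
    have hyA := antitone_of_interlace hlam.antitone hy
    refine le_trans ?_ (h y z hyA hzA).1
    by_cases hys : ∀ k, y k ∈ s k
    · have : ∏ k, g k (y k) = 1 :=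
        Finset.prod_eq_one fun k _ => Set.indicator_of_mem (hys k) _
      rw [this, mul_one]
      exact mul_le_mul_of_nonneg_left (mul_le_mul_of_nonneg_left
        (le_exp_mul_saturProd hlam hx hys hz) (vand_nonneg hzA)) hC
    · push Not at hys
      obtain ⟨k, hk⟩ := hys
      have : ∏ k, g k (y k) = 0 :=
        Finset.prod_eq_zero (Finset.mem_univ k) (Set.indicator_of_notMem hk _)
      rw [this, mul_zero]
      exact mul_nonneg hC (mul_nonneg (vand_nonneg hzA)
        (mul_nonneg (Real.exp_pos _).le (saturProd_nonneg hyA hzA)))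
  refine le_trans (le_of_eq ?_) hmono
  rw [integral_const_mul, hval]
  ring

lemma vand_succ (x : Fin (n + 1) → ℝ) :
    vand x = vand (fun j : Fin n => x j.castSucc - x (Fin.last n)) *
      ∏ j : Fin n, (x j.castSucc - x (Fin.last n)) := by
  simp only [vand, sub_sub_sub_cancel_right]
  exact Fin.prod_prod_Ioi_castSucc _

lemma exp_sum_succ (lam x : Fin (n + 1) → ℝ) :
    Real.exp (∑ k, lam k * x k) = Real.exp (x (Fin.last n) * ∑ i, lam i) *
      Real.exp (∑ k : Fin n, lam k.castSucc * (x k.castSucc - x (Fin.last n))) := by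
  rw [← Real.exp_add]
  congr 1
  simp only [Fin.sum_univ_castSucc, mul_sub, Finset.sum_sub_distrib, ← Finset.sum_mul]
  ring

end

lemma altSum_eq_zero_of_eq {n : ℕ} {lam : Fin n → ℝ} (x : Fin n → ℝ) {i j : Fin n} (hij : i ≠ j)
    (h : lam i = lam j) : altSum lam x = 0 := by
  rw [altSum_eq_det]
  exact Matrix.det_zero_of_row_eq hij (by ext k; simp [h])

lemma saturProd_eq_zero_of_eq {n : ℕ} {lam : Fin n → ℝ} (x : Fin n → ℝ) {i j : Fin n}
    (hij : i < j) (h : lam i = lam j) : saturProd lam x = 0 :=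
  Finset.prod_eq_zero (Finset.mem_univ i)
    (Finset.prod_eq_zero (Finset.mem_Ioi.2 hij) (by simp [satur, h]))

lemma AltSumEstimate.succ {n : ℕ} {C₁ C₂ : ℝ} (hC₁ : 0 < C₁) (hC₂ : 0 < C₂)
    (h : AltSumEstimate n C₁ C₂) :
    AltSumEstimate (n + 1)
      (C₁ * (pairConst n (1 / 4) * Real.exp (-1) ^ n * (1 / 4) ^ n) / pairConst n 2)
      (C₂ * (Nat.factorial (n + 2) * Real.exp 2) ^ n * pairConst n 2) := by
  intro lam x hlam hx
  by_cases hs : StrictAnti lam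
  · have h2 : 0 < pairConst n 2 := pairConst_pos n two_pos
    have h4 : 0 < pairConst n (1 / 4) := pairConst_pos n (by norm_num)
    have hzA : Antitone fun j : Fin n => x j.castSucc - x (Fin.last n) := fun i j hij =>
      sub_le_sub_right (hx (Fin.castSucc_le_castSucc_iff.2 hij)) _
    have hZ : 0 ≤ ∏ j : Fin n, (x j.castSucc - x (Fin.last n)) :=
      Finset.prod_nonneg fun j _ => sub_nonneg.2 (hx (Fin.le_last _))
    obtain ⟨hle, hge⟩ := prod_width_mul_spreadProd_comparable hs hx
    have hup := integral_altSum_le hC₂.le h hs hx rfl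
    have hlow := le_integral_altSum hC₁.le h hs hx rfl
    rw [altSum_succ hlam x, exp_sum_succ, vand_succ]
    set z : Fin n → ℝ := fun j => x j.castSucc - x (Fin.last n)
    set J := ∫ y, altSum y z ∂interlaceMeasure lam
    set e₀ := Real.exp (x (Fin.last n) * ∑ i, lam i)
    set Z := ∏ j : Fin n, (x j.castSucc - x (Fin.last n))
    set W := (∏ k, width lam x k) * spreadProd lam x
    set e₁ := Real.exp (∑ k : Fin n, lam k.castSucc * (x k.castSucc - x (Fin.last n)))
    have hv := vand_nonneg hzA
    have he₀ : 0 ≤ e₀ := (Real.exp_pos _).le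
    have he₁ : 0 ≤ e₁ := (Real.exp_pos _).le
    constructor
    · have hstep : C₁ * (pairConst n (1 / 4) * Real.exp (-1) ^ n * (1 / 4) ^ n) / pairConst n 2 *
          (vand z * e₁ * saturProd lam x) ≤ J := by
        refine le_trans ?_ hlow
        rw [div_mul_eq_mul_div, div_le_iff₀ h2, mul_assoc _ (vand z * e₁ * W)]
        refine mul_le_mul_of_nonneg_left ?_ (by positivity)
        linarith [mul_le_mul_of_nonneg_left hge (mul_nonneg hv he₁)]
      have := mul_le_mul_of_nonneg_left (mul_le_mul_of_nonneg_left hstep hZ) he₀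
      refine le_trans (le_of_eq ?_) this
      ring
    · have hstep : J ≤ C₂ * (Nat.factorial (n + 2) * Real.exp 2) ^ n * pairConst n 2 *
          (vand z * e₁ * saturProd lam x) := by
        refine hup.trans ?_
        rw [mul_assoc _ (pairConst n 2)]
        refine mul_le_mul_of_nonneg_left ?_ (by positivity)
        linarith [mul_le_mul_of_nonneg_left hle (mul_nonneg hv he₁)]
      have := mul_le_mul_of_nonneg_left (mul_le_mul_of_nonneg_left hstep hZ) he₀
      refine this.trans (le_of_eq ?_)
      ring
  · have : ∃ i j, i < j ∧ lam i = lam j := by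
      by_contra hne
      push Not at hne
      exact hs fun i j hij => lt_of_le_of_ne (hlam hij.le) (hne i j hij).symm
    obtain ⟨i, j, hij, he⟩ := this
    simp [altSum_eq_zero_of_eq x hij.ne he, saturProd_eq_zero_of_eq x hij he]

lemma exists_altSumEstimate (n : ℕ) : ∃ C₁ C₂ : ℝ, 0 < C₁ ∧ 0 < C₂ ∧ AltSumEstimate n C₁ C₂ := by
  induction n with
  | zero =>
    refine ⟨1, 1, one_pos, one_pos, fun lam x _ _ => ?_⟩
    simp [altSum, vand, saturProd]
  | succ n ih =>
    obtain ⟨C₁, C₂, h₁, h₂, h⟩ := ih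
    have h2 : 0 < pairConst n 2 := pairConst_pos n two_pos
    have h4 : 0 < pairConst n (1 / 4) := pairConst_pos n (by norm_num)
    exact ⟨_, _, by positivity, by positivity, h.succ h₁ h₂⟩

lemma saturProd_mul_prod {n : ℕ} {lam x : Fin n → ℝ} (hlam : Antitone lam) (hx : Antitone x) :
    saturProd lam x * (∏ i : Fin n, ∏ j ∈ Finset.Ioi i, (1 + (lam i - lam j) * (x i - x j))) =
      vand lam := by
  simp only [saturProd, vand, ← Finset.prod_mul_distrib]
  refine Finset.prod_congr rfl fun i _ => Finset.prod_congr rfl fun j hj => ?_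
  have hij := (Finset.mem_Ioi.1 hj).le
  have := mul_nonneg (sub_nonneg.2 (hlam hij)) (sub_nonneg.2 (hx hij))
  rw [satur, mul_comm (x i - x j), div_mul_cancel₀ _ (by positivity)]

/-- Sharp estimate for the spherical function of the flat complex symmetric space of
type `A_{n-1}`:  `A(λ,x) · ∏_{i<j} (1 + (λ_i−λ_j)(x_i−x_j)) ≍ e^{⟨λ,x⟩} V(λ) V(x)`
for weakly decreasing `λ, x`, with constants depending only on `n`. -/
theorem spherical_estimate_An (n : ℕ) (hn : 1 ≤ n) :
    ∃ C₁ C₂ : ℝ, 0 < C₁ ∧ 0 < C₂ ∧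
      ∀ lam x : Fin n → ℝ, Antitone lam → Antitone x →
        C₁ * (Real.exp (∑ k, lam k * x k) * vand lam * vand x) ≤
            altSum lam x *
              (∏ i : Fin n, ∏ j ∈ Finset.Ioi i, (1 + (lam i - lam j) * (x i - x j))) ∧
        altSum lam x *
              (∏ i : Fin n, ∏ j ∈ Finset.Ioi i, (1 + (lam i - lam j) * (x i - x j))) ≤
          C₂ * (Real.exp (∑ k, lam k * x k) * vand lam * vand x) := by
  obtain ⟨C₁, C₂, h₁, h₂, h⟩ := exists_altSumEstimate n
  refine ⟨C₁, C₂, h₁, h₂, fun lam x hlam hx => ?_⟩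
  have hP : 0 ≤ ∏ i : Fin n, ∏ j ∈ Finset.Ioi i, (1 + (lam i - lam j) * (x i - x j)) :=
    prod_prod_Ioi_nonneg fun i j hij => add_nonneg zero_le_one
      (mul_nonneg (sub_nonneg.2 (hlam hij.le)) (sub_nonneg.2 (hx hij.le)))
  obtain ⟨hlow, hup⟩ := h lam x hlam hx
  rw [← saturProd_mul_prod hlam hx]
  constructor
  · refine le_trans (le_of_eq ?_) (mul_le_mul_of_nonneg_right hlow hP)
    ring
  · refine (mul_le_mul_of_nonneg_right hup hP).trans (le_of_eq ?_)
    ring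
end

section
/- For every n ≥ 1 there exist constants C₁, C₂ > 0 depending only on n such that for all weakly decreasing λ, x ∈ ℝⁿ one has C₁·S ≤ A(λ,x)·∏_{1≤i<j≤n}(1+(λ_i−λ_j)(x_i−x_j)) ≤ C₂·S, where S = V(λ)·(∏_{1≤i<j≤n} sinh(x_i−x_j))·e^{⟨λ,x⟩−ρ(x)}·∏_{1≤i<j≤n}(1+x_i−x_j) and ρ(x) = ∑_{1≤i<j≤n}(x_i−x_j). (Equivalently, the Harish-Chandra spherical function φ_λ(e^x) = c·A(λ,x)/(V(λ)·∏_{i<j} sinh(x_i−x_j)) of the complex symmetric space of type A_{n−1} satisfies φ_λ(e^x) ≍ e^{⟨λ,x⟩−ρ(x)}·∏_{i<j}(1+x_i−x_j)/(1+(λ_i−λ_j)(x_i−x_j)).) -/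
open Finset

/-- `ρ(x) = ∑_{1 ≤ i < j ≤ n} (x_i − x_j)`. -/
def rhoSum {n : ℕ} (x : Fin n → ℝ) : ℝ :=
  ∑ i : Fin n, ∑ j ∈ Finset.Ioi i, (x i - x j)

open MeasureTheory

/-- The product of `f i j` over all pairs `i < j`. -/
noncomputable def pairProd {n : ℕ} (f : Fin n → Fin n → ℝ) : ℝ :=
  ∏ i : Fin n, ∏ j ∈ Finset.Ioi i, f i j

theorem pairProd_eq_ite {n : ℕ} (f : Fin n → Fin n → ℝ) :
    pairProd f = ∏ i, ∏ j, if i < j then f i j else 1 := by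
  unfold pairProd
  refine Finset.prod_congr rfl fun i _ => ?_
  rw [← Finset.prod_filter, Finset.filter_lt_eq_Ioi]

theorem pairProd_castSucc {n : ℕ} (f : Fin (n + 1) → Fin (n + 1) → ℝ) :
    pairProd f = pairProd (fun i j : Fin n => f i.castSucc j.castSucc) *
      ∏ i : Fin n, f i.castSucc (Fin.last n) := by
  simp only [pairProd_eq_ite]
  rw [Fin.prod_univ_castSucc]
  simp only [Fin.prod_univ_castSucc, Finset.prod_mul_distrib]
  simp [Fin.castSucc_lt_last, (Fin.castSucc_lt_last _).not_gt]

theorem pairProd_mul {n : ℕ} (f g : Fin n → Fin n → ℝ) :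
    pairProd (fun i j => f i j * g i j) = pairProd f * pairProd g := by
  simp [pairProd, Finset.prod_mul_distrib]

theorem pairProd_pos {n : ℕ} {f : Fin n → Fin n → ℝ} (h : ∀ i j, i < j → 0 < f i j) :
    0 < pairProd f :=
  Finset.prod_pos fun i _ => Finset.prod_pos fun j hj => h i j (Finset.mem_Ioi.1 hj)

theorem pairProd_le {n : ℕ} {f g : Fin n → Fin n → ℝ} (h0 : ∀ i j, i < j → 0 ≤ f i j)
    (h : ∀ i j, i < j → f i j ≤ g i j) : pairProd f ≤ pairProd g :=
  Finset.prod_le_prod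
    (fun i _ => Finset.prod_nonneg fun j hj => h0 i j (Finset.mem_Ioi.1 hj))
    fun i _ => Finset.prod_le_prod (fun j hj => h0 i j (Finset.mem_Ioi.1 hj))
      fun j hj => h i j (Finset.mem_Ioi.1 hj)

theorem pairProd_snd {n : ℕ} (s : Fin n → ℝ) :
    pairProd (fun _ j => s j) = ∏ j, s j ^ (j : ℕ) := by
  rw [pairProd_eq_ite, Finset.prod_comm]
  refine Finset.prod_congr rfl fun j _ => ?_
  rw [← Finset.prod_filter, Finset.filter_gt_eq_Iio, Finset.prod_const, Fin.card_Iio]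

theorem min_one_mul_le {s t : ℝ} (hs : 1 ≤ s) : min 1 (s * t) ≤ s * min 1 t := by
  rw [mul_min_of_nonneg _ _ (by linarith)]
  exact min_le_min (by linarith) le_rfl

theorem min_one_le_mul {s t u : ℝ} (hs : 1 ≤ s) (h : u ≤ s * t) : min 1 u ≤ s * min 1 t :=
  (min_le_min le_rfl h).trans (min_one_mul_le hs)

theorem le_mul_min_one {s t : ℝ} (hs : 1 ≤ s) (ht : 0 ≤ t) (h : t ≤ s) : t ≤ s * min 1 t := by
  rcases min_cases 1 t with ⟨h1, _⟩ | ⟨h1, _⟩ <;> rw [h1] <;> nlinarith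

theorem min_one_mul_min_one_le {a b p q : ℝ} (ha : 0 < a) (hb : 0 < b) (hp : 0 < p)
    (hq : 0 < q) :
    min 1 (a * (p + q)) * min 1 ((a + min b q⁻¹) * p) ≤
      4 * (min 1 ((a + b) * (p + q)) * min 1 (a * p)) := by
  have hm : ∀ {t : ℝ}, 0 < t → 0 < min 1 t := fun ht => lt_min one_pos ht
  have ht : 0 < min b q⁻¹ := lt_min hb (inv_pos.2 hq)
  have e1 := hm (show 0 < a * (p + q) by positivity)
  have e2 := hm (show 0 < (a + min b q⁻¹) * p by positivity)
  have e3 := hm (show 0 < (a + b) * (p + q) by positivity)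
  have e4 := hm (show 0 < a * p by positivity)
  have tb : min b q⁻¹ ≤ b := min_le_left _ _
  have key : ∀ {u v w z : ℝ}, 0 < u → 0 < v → 0 < w → 0 < z → u ≤ 2 * z → v ≤ 2 * w →
      u * v ≤ 4 * (w * z) := by
    intro u v w z hu hv hw hz h1 h2
    have := mul_le_mul h1 h2 hv.le (by linarith)
    linarith
  rcases le_or_gt q p with h | h
  · refine key e1 e2 e3 e4 (min_one_le_mul one_le_two (by nlinarith))
      (min_one_le_mul one_le_two ?_)
    nlinarith [mul_le_mul_of_nonneg_right tb hp.le, mul_pos hb hq, mul_pos ha hq, mul_pos ha hp, mul_pos hb hp]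
  rcases le_or_gt b q⁻¹ with hbq | hbq
  · rw [min_eq_left hbq] at *
    have hbq' : b * q ≤ 1 := by
      have := mul_le_mul_of_nonneg_right hbq hq.le
      rwa [inv_mul_cancel₀ hq.ne'] at this
    rcases le_or_gt b a with hab | hab
    · rw [mul_comm]
      refine key e2 e1 e3 e4 (min_one_le_mul one_le_two (by nlinarith))
        (min_one_le_mul one_le_two (by nlinarith [mul_pos hb hq, mul_pos ha hq, mul_pos ha hp, mul_pos hb hp]))
    · have hap : a * p ≤ 1 := by nlinarith
      have h4 : (a + b) * (p + q) ≤ 4 := by nlinarith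
      rw [min_eq_right hap]
      have := le_mul_min_one (by norm_num : (1:ℝ) ≤ 4) (by positivity) h4
      have h5 := mul_le_mul (min_le_right 1 (a * (p + q))) (min_le_right 1 ((a + b) * p)) e2.le
        (by positivity)
      have h6 := mul_le_mul_of_nonneg_right this (show 0 ≤ a * p by positivity)
      nlinarith
  · rw [min_eq_right hbq.le] at *
    have hbq' : 1 < b * q := by
      have := mul_lt_mul_of_pos_right hbq hq
      rwa [inv_mul_cancel₀ hq.ne'] at this
    have h1 : 1 ≤ (a + b) * (p + q) := by nlinarith [mul_pos ha hq, mul_pos ha hp, mul_pos hb hp]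
    rw [min_eq_left h1] at *
    rcases le_or_gt 1 (a * q) with haq | haq
    · have hqa : q⁻¹ ≤ a := by rwa [inv_le_iff_one_le_mul₀ hq]
      rw [mul_comm]
      exact key e2 e1 one_pos e4 (min_one_le_mul one_le_two (by nlinarith))
        ((min_le_left _ _).trans (by norm_num))
    · have hqa : a < q⁻¹ := by rwa [lt_inv_comm₀ ha hq, ← one_div, lt_div_iff₀ ha, mul_comm]
      have hap : a * p ≤ 1 := by nlinarith
      rw [min_eq_right hap]
      have h5 := mul_le_mul (min_le_right 1 (a * (p + q))) (min_le_right 1 ((a + q⁻¹) * p)) e2.le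
        (by positivity)
      have h6 : a * (p + q) * ((a + q⁻¹) * p) ≤ (a * (2 * q)) * ((2 * q⁻¹) * p) := by
        gcongr <;> linarith
      have h7 : (a * (2 * q)) * ((2 * q⁻¹) * p) = 4 * (a * p) := by field_simp; ring
      linarith

theorem min_one_mul_min_one_ge {a b p q : ℝ} (ha : 0 < a) (hb : 0 < b) (hp : 0 < p)
    (hq : 0 < q) :
    min 1 ((a + b) * (p + q)) * min 1 (a * p) ≤
      4 * (min 1 (a * (p + q)) * min 1 ((a + min b q⁻¹) * p)) := by
  have hm : ∀ {t : ℝ}, 0 < t → 0 < min 1 t := fun ht => lt_min one_pos ht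
  have ht : 0 < min b q⁻¹ := lt_min hb (inv_pos.2 hq)
  have e1 := hm (show 0 < a * (p + q) by positivity)
  have e2 := hm (show 0 < (a + min b q⁻¹) * p by positivity)
  have e3 := hm (show 0 < (a + b) * (p + q) by positivity)
  have e4 := hm (show 0 < a * p by positivity)
  have key : ∀ {u v w z : ℝ}, 0 < u → 0 < v → 0 < w → 0 < z → u ≤ 2 * w → v ≤ 2 * z →
      u * v ≤ 4 * (w * z) := by
    intro u v w z hu hv hw hz h1 h2
    have := mul_le_mul h1 h2 hv.le (by linarith)
    linarith
  have aq := mul_pos ha hq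
  have ap := mul_pos ha hp
  have bq := mul_pos hb hq
  have bp := mul_pos hb hp
  rcases le_or_gt b q⁻¹ with hbq | hbq
  · rw [min_eq_left hbq] at *
    have hbq' : b * q ≤ 1 := by
      have := mul_le_mul_of_nonneg_right hbq hq.le
      rwa [inv_mul_cancel₀ hq.ne'] at this
    rcases le_or_gt q p with h | h
    · rw [mul_comm]
      exact key e4 e3 e1 e2 (min_one_le_mul one_le_two (by nlinarith))
        (min_one_le_mul one_le_two (by nlinarith))
    rcases le_or_gt b a with hab | hab
    · exact key e3 e4 e1 e2 (min_one_le_mul one_le_two (by nlinarith))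
        (min_one_le_mul one_le_two (by nlinarith))
    · have h1 := le_mul_min_one one_le_two (by positivity) (show a * (p + q) ≤ 2 by nlinarith)
      have h2 := le_mul_min_one one_le_two (by positivity) (show (a + b) * p ≤ 2 by nlinarith)
      have h3 := mul_le_mul (min_le_right 1 ((a + b) * (p + q))) (min_le_right 1 (a * p)) e4.le
        (by positivity)
      have h4 := mul_le_mul h1 h2 (by positivity) (by positivity)
      nlinarith
  · rw [min_eq_right hbq.le] at *
    have hbq' : 1 < b * q := by
      have := mul_lt_mul_of_pos_right hbq hq
      rwa [inv_mul_cancel₀ hq.ne'] at this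
    have hl : min 1 ((a + b) * (p + q)) ≤ 1 := min_le_left _ _
    have hqi := inv_pos.2 hq
    rcases le_or_gt q p with h | h
    · have h1 : 1 ≤ (a + q⁻¹) * p := by
        have : 1 ≤ q⁻¹ * p := by rw [inv_mul_eq_div, one_le_div hq]; exact h
        nlinarith
      rw [min_eq_left h1] at *
      rw [mul_comm]
      exact key e4 e3 e1 one_pos (min_one_le_mul one_le_two (by nlinarith)) (by linarith)
    rcases le_or_gt 1 (a * q) with haq | haq
    · rw [min_eq_left (show 1 ≤ a * (p + q) by nlinarith)] at *
      exact key e3 e4 one_pos e2 (by linarith) (min_one_le_mul one_le_two (by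
        nlinarith [mul_pos hqi hp]))
    · have hqa : a < q⁻¹ := by rwa [lt_inv_comm₀ ha hq, ← one_div, lt_div_iff₀ ha, mul_comm]
      have hpq : q⁻¹ * p ≤ 1 := by rw [inv_mul_eq_div, div_le_one hq]; exact h.le
      have h1 := le_mul_min_one one_le_two (by positivity) (show a * (p + q) ≤ 2 by nlinarith)
      have h2 := le_mul_min_one one_le_two (by positivity) (show (a + q⁻¹) * p ≤ 2 by nlinarith)
      have h4 := mul_le_mul h1 h2 (by positivity) (by positivity)
      have h5 : (a * q) * (q⁻¹ * p) ≤ a * (p + q) * ((a + q⁻¹) * p) := by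
        gcongr <;> linarith
      have h6 : (a * q) * (q⁻¹ * p) = a * p := by field_simp
      have h7 := mul_le_mul hl (min_le_right 1 (a * p)) e4.le (by positivity)
      linarith

theorem mul_prod_le_of_step {n : ℕ} {C : ℝ} (hC : 0 ≤ C) (V : Fin (n + 1) → ℝ)
    (f g : Fin n → ℝ) (hf : ∀ j, 0 ≤ f j) (hg : ∀ j, 0 ≤ g j)
    (h : ∀ j, V j.castSucc * f j ≤ C * (V j.succ * g j)) :
    V 0 * ∏ j, f j ≤ C ^ n * (V (Fin.last n) * ∏ j, g j) := by
  induction n with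
  | zero => simp
  | succ n ih =>
    have h1 := ih (fun k => V k.castSucc) (fun j => f j.castSucc) (fun j => g j.castSucc)
      (fun j => hf _) (fun j => hg _) fun j => h j.castSucc
    have h2 := h (Fin.last n)
    rw [Fin.prod_univ_castSucc, Fin.prod_univ_castSucc]
    have hG : 0 ≤ ∏ j : Fin n, g j.castSucc := Finset.prod_nonneg fun j _ => hg _
    calc V 0 * ((∏ j : Fin n, f j.castSucc) * f (Fin.last n))
        = V 0 * (∏ j : Fin n, f j.castSucc) * f (Fin.last n) := by ring
      _ ≤ C ^ n * (V (Fin.last n).castSucc * ∏ j : Fin n, g j.castSucc) * f (Fin.last n) :=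
          mul_le_mul_of_nonneg_right h1 (hf _)
      _ = C ^ n * (∏ j : Fin n, g j.castSucc) * (V (Fin.last n).castSucc * f (Fin.last n)) := by
          ring
      _ ≤ C ^ n * (∏ j : Fin n, g j.castSucc) * (C * (V (Fin.last n).succ * g (Fin.last n))) :=
          mul_le_mul_of_nonneg_left h2 (by positivity)
      _ = _ := by rw [Fin.succ_last, pow_succ]; ring

/-- Telescoping over the indices strictly above `i`. -/
theorem mul_prod_Ioi_le_of_step {n : ℕ} {C : ℝ} (hC : 1 ≤ C) (U : Fin (n + 1) → ℝ)
    (f g : Fin n → ℝ) (i : Fin n) (hU : 0 ≤ U i.succ) (hf : ∀ j, i < j → 0 ≤ f j)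
    (hg : ∀ j, i < j → 0 ≤ g j)
    (h : ∀ j, i < j → U j.castSucc * f j ≤ C * (U j.succ * g j)) :
    U i.succ * ∏ j ∈ Finset.Ioi i, f j ≤
      C ^ n * (U (Fin.last n) * ∏ j ∈ Finset.Ioi i, g j) := by
  have := mul_prod_le_of_step (n := n) (C := C) (by linarith) (fun k => U (max k i.succ))
    (fun j => if i < j then f j else 1) (fun j => if i < j then g j else 1)
    (fun j => by split_ifs with hj; exacts [hf j hj, zero_le_one])
    (fun j => by split_ifs with hj; exacts [hg j hj, zero_le_one])
    (fun j => by
      split_ifs with hj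
      · rw [max_eq_left (Fin.succ_le_castSucc_iff.2 hj),
          max_eq_left (Fin.succ_le_succ_iff.2 hj.le)]
        exact h j hj
      · rw [not_lt] at hj
        rw [max_eq_right (Fin.succ_le_succ_iff.2 hj),
          max_eq_right ((Fin.castSucc_lt_succ).le.trans (Fin.succ_le_succ_iff.2 hj))]
        nlinarith)
  rwa [max_eq_right (Fin.zero_le _), max_eq_left (Fin.le_last _), ← Finset.prod_filter,
    ← Finset.prod_filter, Finset.filter_lt_eq_Ioi] at this

theorem inv_mul_le_mul_inv_mul_iff {u v f g C : ℝ} (hu : 0 < u) (hv : 0 < v) :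
    u⁻¹ * f ≤ C * (v⁻¹ * g) ↔ v * f ≤ C * (u * g) := by
  rw [← mul_le_mul_iff_right₀ (mul_pos hu hv), show u * v * (u⁻¹ * f) = v * f by field_simp,
    show u * v * (C * (v⁻¹ * g)) = C * (u * g) by field_simp]

theorem prod_le_pow_mul_prod {n : ℕ} {K : ℝ} {f g : Fin n → ℝ} (h0 : ∀ i, 0 ≤ f i)
    (h : ∀ i, f i ≤ K * g i) : ∏ i, f i ≤ K ^ n * ∏ i, g i := by
  calc ∏ i, f i ≤ ∏ i, (K * g i) := Finset.prod_le_prod (fun i _ => h0 i) fun i _ => h i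
    _ = K ^ n * ∏ i, g i := by
      rw [Finset.prod_mul_distrib, Finset.prod_const, Finset.card_univ, Fintype.card_fin]

/-- The product bound that integrating over interlacing vectors produces. -/
noncomputable def interlacingBound {n : ℕ} (lam x : Fin (n + 1) → ℝ) : ℝ :=
  (∏ j : Fin n, min 1 ((lam j.castSucc - lam j.succ) * (x j.castSucc - x (Fin.last n)))) *
    pairProd fun i j : Fin n => min 1 ((lam i.castSucc - lam j.castSucc +
      min (lam j.castSucc - lam j.succ) (x j.castSucc - x (Fin.last n))⁻¹) *
        (x i.castSucc - x j.castSucc))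

theorem interlacingBound_le {n : ℕ} {lam x : Fin (n + 1) → ℝ} (hl : StrictAnti lam)
    (hx : StrictAnti x) :
    interlacingBound lam x ≤
      (4 ^ n) ^ n * pairProd fun i j => min 1 ((lam i - lam j) * (x i - x j)) := by
  have hm : ∀ {s t : ℝ}, 0 < s → 0 < t → 0 < min 1 (s * t) :=
    fun hs ht => lt_min one_pos (mul_pos hs ht)
  rw [pairProd_castSucc, interlacingBound, pairProd, pairProd, mul_comm (∏ i : Fin n, ∏ j ∈ _, _),
    ← Finset.prod_mul_distrib, ← Finset.prod_mul_distrib]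
  have hle : ∀ i : Fin n, _ := fun i => mul_prod_Ioi_le_of_step (n := n) (C := 4) (by norm_num)
    (fun k => min 1 ((lam i.castSucc - lam k) * (x i.castSucc - x (Fin.last n))))
    (fun j => min 1 ((lam i.castSucc - lam j.castSucc +
      min (lam j.castSucc - lam j.succ) (x j.castSucc - x (Fin.last n))⁻¹) *
        (x i.castSucc - x j.castSucc)))
    (fun j => min 1 ((lam i.castSucc - lam j.castSucc) * (x i.castSucc - x j.castSucc))) i
    (hm (sub_pos.2 (hl Fin.castSucc_lt_succ)) (sub_pos.2 (hx (Fin.castSucc_lt_last _)))).le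
    ?_ ?_ ?_
  · refine prod_le_pow_mul_prod (fun i => ?_) hle
    refine mul_nonneg (hm (sub_pos.2 (hl Fin.castSucc_lt_succ))
      (sub_pos.2 (hx (Fin.castSucc_lt_last _)))).le (Finset.prod_nonneg fun j hj => ?_)
    have hij := Fin.castSucc_lt_castSucc_iff.2 (Finset.mem_Ioi.1 hj)
    exact (hm (add_pos (sub_pos.2 (hl hij)) (lt_min (sub_pos.2 (hl Fin.castSucc_lt_succ))
      (inv_pos.2 (sub_pos.2 (hx (Fin.castSucc_lt_last _)))))) (sub_pos.2 (hx hij))).le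
  · intro j hj
    have hij := Fin.castSucc_lt_castSucc_iff.2 hj
    exact (hm (add_pos (sub_pos.2 (hl hij)) (lt_min (sub_pos.2 (hl Fin.castSucc_lt_succ))
      (inv_pos.2 (sub_pos.2 (hx (Fin.castSucc_lt_last _)))))) (sub_pos.2 (hx hij))).le
  · intro j hj
    have hij := Fin.castSucc_lt_castSucc_iff.2 hj
    exact (hm (sub_pos.2 (hl hij)) (sub_pos.2 (hx hij))).le
  · intro j hj
    have hij := Fin.castSucc_lt_castSucc_iff.2 hj
    have := min_one_mul_min_one_le (sub_pos.2 (hl hij))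
      (sub_pos.2 (hl (Fin.castSucc_lt_succ (i := j)))) (sub_pos.2 (hx hij))
      (sub_pos.2 (hx (Fin.castSucc_lt_last j)))
    simpa only [sub_add_sub_cancel] using this

theorem le_interlacingBound {n : ℕ} {lam x : Fin (n + 1) → ℝ} (hl : StrictAnti lam)
    (hx : StrictAnti x) :
    pairProd (fun i j => min 1 ((lam i - lam j) * (x i - x j))) ≤
      (4 ^ n) ^ n * interlacingBound lam x := by
  have hm : ∀ {s t : ℝ}, 0 < s → 0 < t → 0 < min 1 (s * t) :=
    fun hs ht => lt_min one_pos (mul_pos hs ht)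
  rw [pairProd_castSucc, interlacingBound, pairProd, pairProd, mul_comm (∏ i : Fin n, ∏ j ∈ _, _),
    ← Finset.prod_mul_distrib, ← Finset.prod_mul_distrib]
  have hU : ∀ i k : Fin (n + 1), i < k →
      0 < min 1 ((lam i - lam k) * (x i - x (Fin.last n))) := fun i k hk =>
    hm (sub_pos.2 (hl hk)) (sub_pos.2 (hx (hk.trans_le (Fin.le_last _))))
  have hle : ∀ i : Fin n, _ := fun i => mul_prod_Ioi_le_of_step (n := n) (C := 4) (by norm_num)
    (fun k => (min 1 ((lam i.castSucc - lam k) * (x i.castSucc - x (Fin.last n))))⁻¹)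
    (fun j => min 1 ((lam i.castSucc - lam j.castSucc) * (x i.castSucc - x j.castSucc)))
    (fun j => min 1 ((lam i.castSucc - lam j.castSucc +
      min (lam j.castSucc - lam j.succ) (x j.castSucc - x (Fin.last n))⁻¹) *
        (x i.castSucc - x j.castSucc))) i
    (inv_nonneg.2 (hU _ _ Fin.castSucc_lt_succ).le) ?_ ?_ ?_
  · refine prod_le_pow_mul_prod (fun i => ?_) fun i => ?_
    · refine mul_nonneg (hU _ _ (Fin.castSucc_lt_last _)).le (Finset.prod_nonneg fun j hj => ?_)
      have hij := Fin.castSucc_lt_castSucc_iff.2 (Finset.mem_Ioi.1 hj)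
      exact (hm (sub_pos.2 (hl hij)) (sub_pos.2 (hx hij))).le
    · exact (inv_mul_le_mul_inv_mul_iff (hU _ _ (Fin.castSucc_lt_succ (i := i)))
        (hU _ _ (Fin.castSucc_lt_last i))).1 (hle i)
  · intro j hj
    have hij := Fin.castSucc_lt_castSucc_iff.2 hj
    exact (hm (sub_pos.2 (hl hij)) (sub_pos.2 (hx hij))).le
  · intro j hj
    have hij := Fin.castSucc_lt_castSucc_iff.2 hj
    exact (hm (add_pos (sub_pos.2 (hl hij)) (lt_min (sub_pos.2 (hl Fin.castSucc_lt_succ))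
      (inv_pos.2 (sub_pos.2 (hx (Fin.castSucc_lt_last _)))))) (sub_pos.2 (hx hij))).le
  · intro j hj
    have hij := Fin.castSucc_lt_castSucc_iff.2 hj
    have := min_one_mul_min_one_ge (sub_pos.2 (hl hij))
      (sub_pos.2 (hl (Fin.castSucc_lt_succ (i := j)))) (sub_pos.2 (hx hij))
      (sub_pos.2 (hx (Fin.castSucc_lt_last j)))
    simp only [sub_add_sub_cancel] at this
    exact (inv_mul_le_mul_inv_mul_iff (hU _ _ hij)
      (hU _ _ (hij.trans (Fin.castSucc_lt_succ (i := j))))).2 this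

theorem det_eq_det_sub_of_last_column {n : ℕ} (M : Matrix (Fin (n + 1)) (Fin (n + 1)) ℝ)
    (hM : ∀ i, M i (Fin.last n) = 1) :
    M.det = (Matrix.of fun i j : Fin n => M i.castSucc j.castSucc - M i.succ j.castSucc).det := by
  have h := Matrix.det_eq_of_forall_row_eq_smul_add_pred (A := M)
    (B := Matrix.of (Fin.cons (M 0) fun i j => M i.succ j - M i.castSucc j)) (fun _ => 1)
    (fun j => by simp) (fun i j => by simp)
  rw [h, Matrix.det_succ_column _ (Fin.last n), Fin.sum_univ_succ]
  have h2 : (Matrix.of fun i j : Fin n => M i.castSucc j.castSucc - M i.succ j.castSucc) =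
      -(Matrix.of fun i j : Fin n => M i.succ j.castSucc - M i.castSucc j.castSucc) := by
    ext i j
    simp
  rw [h2, Matrix.det_neg]
  simp [hM]
  rfl

theorem setIntegral_Ioo_mul_exp {a b y : ℝ} (hab : a ≤ b) :
    ∫ t in Set.Ioo a b, y * Real.exp (t * y) = Real.exp (b * y) - Real.exp (a * y) := by
  rw [← integral_Ioc_eq_integral_Ioo, ← intervalIntegral.integral_of_le hab]
  refine intervalIntegral.integral_eq_sub_of_hasDerivAt (f := fun t => Real.exp (t * y)) ?_ ?_
  · intro t _
    simpa [mul_comm] using ((hasDerivAt_id t).mul_const y).exp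
  · exact (by fun_prop : Continuous fun t => y * Real.exp (t * y)).intervalIntegrable _ _

theorem setIntegral_pi_prod {n : ℕ} (s : Fin n → Set ℝ) (f : Fin n → ℝ → ℝ) :
    ∫ t in Set.univ.pi s, ∏ i, f i (t i) = ∏ i, ∫ u in s i, f i u := by
  rw [volume_pi, Measure.restrict_pi_pi, integral_fintype_prod_eq_prod]

theorem integrableOn_pi_Ioo {n : ℕ} {a b : Fin n → ℝ} {f : (Fin n → ℝ) → ℝ}
    (hf : Continuous f) : IntegrableOn f (Set.univ.pi fun i => Set.Ioo (a i) (b i)) :=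
  (hf.integrableOn_Icc (a := a) (b := b)).mono_set
    ((Set.pi_mono fun _ _ => Set.Ioo_subset_Icc_self).trans (Set.pi_univ_Icc a b).subset)

/-- The determinant of the matrix `exp (lam i * x j)`. -/
noncomputable def expDet {n : ℕ} (lam x : Fin n → ℝ) : ℝ :=
  (Matrix.of fun i j => Real.exp (lam i * x j)).det

theorem continuous_expDet {n : ℕ} (x : Fin n → ℝ) : Continuous fun lam => expDet lam x := by
  unfold expDet
  exact Continuous.matrix_det (by fun_prop)

/-- The determinant as an integral over vectors interlacing with `lam`. -/
theorem expDet_eq_integral {n : ℕ} {lam x : Fin (n + 1) → ℝ} (hl : StrictAnti lam) :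
    expDet lam x = Real.exp (∑ i, lam i * x (Fin.last n)) *
      ∫ t in Set.univ.pi fun i : Fin n => Set.Ioo (lam i.succ) (lam i.castSucc),
        (∏ j : Fin n, (x j.castSucc - x (Fin.last n))) *
          expDet t fun j : Fin n => x j.castSucc - x (Fin.last n) := by
  have h1 : expDet lam x = Real.exp (∑ i, lam i * x (Fin.last n)) *
      (Matrix.of fun i j => Real.exp (lam i * (x j - x (Fin.last n)))).det := by
    rw [Real.exp_sum, ← Matrix.det_mul_column, expDet]
    congr 1
    ext i j
    simp only [Matrix.of_apply]
    rw [← Real.exp_add]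
    ring_nf
  rw [h1, det_eq_det_sub_of_last_column _ (by simp)]
  congr 1
  have h2 : ∀ t : Fin n → ℝ, (∏ j : Fin n, (x j.castSucc - x (Fin.last n))) *
      expDet t (fun j : Fin n => x j.castSucc - x (Fin.last n)) =
      ∑ σ : Equiv.Perm (Fin n), ((Equiv.Perm.sign σ : ℤ) : ℝ) *
        ∏ i, ((x (σ i).castSucc - x (Fin.last n)) *
          Real.exp (t i * (x (σ i).castSucc - x (Fin.last n)))) := by
    intro t
    rw [expDet, ← Matrix.det_transpose, Matrix.det_apply', Finset.mul_sum]
    refine Finset.sum_congr rfl fun σ _ => ?_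
    rw [Finset.prod_mul_distrib, Equiv.prod_comp σ fun j => x j.castSucc - x (Fin.last n)]
    simp only [Matrix.transpose_apply, Matrix.of_apply]
    ring
  simp_rw [h2]
  rw [integral_finsetSum _ fun σ _ => integrableOn_pi_Ioo (by fun_prop),
    ← Matrix.det_transpose, Matrix.det_apply']
  refine Finset.sum_congr rfl fun σ _ => ?_
  rw [integral_const_mul, setIntegral_pi_prod _ fun i u => (x (σ i).castSucc - x (Fin.last n)) *
          Real.exp (u * (x (σ i).castSucc - x (Fin.last n)))]
  congr 1
  refine Finset.prod_congr rfl fun i _ => ?_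
  rw [setIntegral_Ioo_mul_exp (hl Fin.castSucc_lt_succ).le]
  simp

theorem two_add_pow_le {N j : ℕ} (hN : 1 ≤ N) (hj : j ≤ N) {s : ℝ} (hs : 0 ≤ s) :
    (2 + s) ^ j ≤ (4 * N) ^ N * Real.exp (s / 2) := by
  have hN' : (1 : ℝ) ≤ N := by exact_mod_cast hN
  have h1 : 2 + s ≤ 4 * N * Real.exp (s / (2 * N)) := by
    have := Real.add_one_le_exp (s / (2 * N))
    calc 2 + s ≤ 4 * N * (s / (2 * N) + 1) := by field_simp; nlinarith
      _ ≤ _ := by gcongr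
  calc (2 + s) ^ j ≤ (2 + s) ^ N := pow_le_pow_right₀ (by linarith) hj
    _ ≤ (4 * N * Real.exp (s / (2 * N))) ^ N := by gcongr
    _ = (4 * N) ^ N * Real.exp (s / 2) := by
      rw [mul_pow, ← Real.exp_nat_mul]
      congr 2
      field_simp

theorem setIntegral_Ioo_mul_exp_half_le {l g y : ℝ} (hg : 0 < g) (hy : 0 < y) :
    ∫ t in Set.Ioo (l - g) l, y * Real.exp (t * y + (l - t) * y / 2) ≤
      2 * (Real.exp (l * y) * min 1 (g * y)) := by
  have h1 : ∀ t, y * Real.exp (t * y + (l - t) * y / 2) =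
      2 * Real.exp (l * y / 2) * (y / 2 * Real.exp (t * (y / 2))) := by
    intro t
    rw [show t * y + (l - t) * y / 2 = l * y / 2 + t * (y / 2) by ring, Real.exp_add]
    ring
  simp_rw [h1]
  rw [integral_const_mul, setIntegral_Ioo_mul_exp (by linarith)]
  have h2 : Real.exp (l * y / 2) * (Real.exp (l * (y / 2)) - Real.exp ((l - g) * (y / 2))) =
      Real.exp (l * y) * (1 - Real.exp (-(g * y / 2))) := by
    rw [mul_sub, mul_sub, ← Real.exp_add, ← Real.exp_add, ← Real.exp_add]
    ring_nf
  rw [mul_assoc, h2]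
  gcongr
  have := Real.add_one_le_exp (-(g * y / 2))
  have := Real.exp_pos (-(g * y / 2))
  have := mul_pos hg hy
  exact le_min (by linarith) (by linarith)

/-- Two-sided product estimate for `expDet`, with constants. -/
def ExpDetBounds (n : ℕ) (c C : ℝ) : Prop :=
  ∀ lam x : Fin n → ℝ, StrictAnti lam → StrictAnti x →
    c * (Real.exp (∑ i, lam i * x i) *
      pairProd fun i j => min 1 ((lam i - lam j) * (x i - x j))) ≤ expDet lam x ∧
    expDet lam x ≤ C * (Real.exp (∑ i, lam i * x i) *
      pairProd fun i j => min 1 ((lam i - lam j) * (x i - x j)))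

section Interlacing

variable {n : ℕ} {c C : ℝ} {l g y : Fin n → ℝ}

theorem strictAnti_of_mem_box (hlg : ∀ i j, i < j → l j ≤ l i - g i) {t : Fin n → ℝ}
    (ht : ∀ i, t i ∈ Set.Ioo (l i - g i) (l i)) : StrictAnti t := fun i j hij =>
  ((ht j).2.trans_le (hlg i j hij)).trans (ht i).1

theorem pairProd_le_of_mem_box (hlg : ∀ i j, i < j → l j ≤ l i - g i) (hg : ∀ i, 0 < g i)
    (hy : StrictAnti y) (hy0 : ∀ i, 0 < y i) {t : Fin n → ℝ}
    (ht : ∀ i, t i ∈ Set.Ioo (l i - g i) (l i)) :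
    pairProd (fun i j => min 1 ((t i - t j) * (y i - y j))) ≤
      ((4 * (n + 1 : ℕ)) ^ (n + 1)) ^ n * (∏ j, Real.exp ((l j - t j) * y j / 2)) *
        pairProd fun i j => min 1 ((l i - l j + min (g j) (y j)⁻¹) * (y i - y j)) := by
  have hs : ∀ j, 0 ≤ (l j - t j) * y j := fun j =>
    mul_nonneg (sub_nonneg.2 (ht j).2.le) (hy0 j).le
  have hta := strictAnti_of_mem_box hlg ht
  calc pairProd (fun i j => min 1 ((t i - t j) * (y i - y j)))
      ≤ pairProd (fun i j => (2 + (l j - t j) * y j) *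
          min 1 ((l i - l j + min (g j) (y j)⁻¹) * (y i - y j))) := by
        refine pairProd_le (fun i j hij => ?_) fun i j hij => ?_
        · exact le_min zero_le_one
            (mul_nonneg (sub_nonneg.2 (hta hij).le) (sub_nonneg.2 (hy hij).le))
        · refine min_one_le_mul (by linarith [hs j]) ?_
          rw [← mul_assoc]
          refine mul_le_mul_of_nonneg_right ?_ (sub_nonneg.2 (hy hij).le)
          have h1 : l j - t j ≤ (2 + (l j - t j) * y j) * min (g j) (y j)⁻¹ := by
            have h2 := hs j
            have h3 := ht j
            rcases min_cases (g j) (y j)⁻¹ with ⟨h, _⟩ | ⟨h, _⟩ <;> rw [h]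
            · nlinarith [h3.1, hg j]
            · rw [add_mul, mul_assoc (l j - t j), mul_inv_cancel₀ (hy0 j).ne']
              have := inv_pos.2 (hy0 j)
              linarith
          have h4 : 0 ≤ l i - l j := by linarith [hlg i j hij, hg i]
          nlinarith [(ht i).2, hs j, mul_nonneg (hs j) h4]
    _ = (∏ j, (2 + (l j - t j) * y j) ^ (j : ℕ)) *
          pairProd fun i j => min 1 ((l i - l j + min (g j) (y j)⁻¹) * (y i - y j)) := by
        rw [pairProd_mul, pairProd_snd]
    _ ≤ _ := by
        refine mul_le_mul_of_nonneg_right ?_ (pairProd_pos fun i j hij => ?_).le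
        · exact prod_le_pow_mul_prod (fun j => pow_nonneg (by linarith [hs j]) _)
            fun j => two_add_pow_le (by omega) (by omega) (hs j)
        · refine lt_min one_pos (mul_pos ?_ (sub_pos.2 (hy hij)))
          have := lt_min (hg j) (inv_pos.2 (hy0 j))
          linarith [hlg i j hij, hg i]

theorem setIntegral_expDet_le (hC : 0 < C) (h : ExpDetBounds n c C)
    (hlg : ∀ i j, i < j → l j ≤ l i - g i) (hg : ∀ i, 0 < g i)
    (hy : StrictAnti y) (hy0 : ∀ i, 0 < y i) :
    ∫ t in Set.univ.pi fun i => Set.Ioo (l i - g i) (l i), (∏ j, y j) * expDet t y ≤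
      C * ((4 * (n + 1 : ℕ)) ^ (n + 1)) ^ n * 2 ^ n * (Real.exp (∑ i, l i * y i) *
        ((∏ j, min 1 (g j * y j)) *
          pairProd fun i j => min 1 ((l i - l j + min (g j) (y j)⁻¹) * (y i - y j)))) := by
  set Q := pairProd fun i j => min 1 ((l i - l j + min (g j) (y j)⁻¹) * (y i - y j)) with hQ
  have hQ0 : 0 < Q := pairProd_pos fun i j hij => by
    refine lt_min one_pos (mul_pos ?_ (sub_pos.2 (hy hij)))
    have := lt_min (hg j) (inv_pos.2 (hy0 j))
    linarith [hlg i j hij, hg i]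
  have hbox : MeasurableSet (Set.univ.pi fun i => Set.Ioo (l i - g i) (l i)) :=
    MeasurableSet.univ_pi fun _ => measurableSet_Ioo
  set K : ℝ := ((4 * (n + 1 : ℕ)) ^ (n + 1)) ^ n with hK
  have hK0 : 0 < K := by positivity
  calc ∫ t in Set.univ.pi fun i => Set.Ioo (l i - g i) (l i), (∏ j, y j) * expDet t y
      ≤ ∫ t in Set.univ.pi fun i => Set.Ioo (l i - g i) (l i),
          C * K * Q * ∏ j, (y j * Real.exp (t j * y j + (l j - t j) * y j / 2)) := by
        refine setIntegral_mono_on (integrableOn_pi_Ioo ((continuous_expDet y).const_mul _))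
          (integrableOn_pi_Ioo (by fun_prop)) hbox fun t ht => ?_
        have ht' : ∀ i, t i ∈ Set.Ioo (l i - g i) (l i) := fun i => ht i (Set.mem_univ i)
        have h1 := (h t y (strictAnti_of_mem_box hlg ht') hy).2
        have h2 := pairProd_le_of_mem_box hlg hg hy hy0 ht'
        have hY : 0 < ∏ j, y j := Finset.prod_pos fun j _ => hy0 j
        calc (∏ j, y j) * expDet t y
            ≤ (∏ j, y j) * (C * (Real.exp (∑ i, t i * y i) *
                (K * (∏ j, Real.exp ((l j - t j) * y j / 2)) * Q))) := by
              refine mul_le_mul_of_nonneg_left (h1.trans ?_) hY.le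
              gcongr
          _ = _ := by
              simp only [Finset.prod_mul_distrib, Real.exp_add, Real.exp_sum]
              ring
    _ = C * K * Q * ∏ j, ∫ t in Set.Ioo (l j - g j) (l j),
          y j * Real.exp (t * y j + (l j - t) * y j / 2) := by
        rw [integral_const_mul, setIntegral_pi_prod _ fun j t =>
          y j * Real.exp (t * y j + (l j - t) * y j / 2)]
    _ ≤ C * K * Q * (2 ^ n * ∏ j, (Real.exp (l j * y j) * min 1 (g j * y j))) := by
        refine mul_le_mul_of_nonneg_left ?_ (by positivity)
        refine prod_le_pow_mul_prod (fun j => ?_)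
          fun j => setIntegral_Ioo_mul_exp_half_le (hg j) (hy0 j)
        exact setIntegral_nonneg measurableSet_Ioo fun t _ =>
          mul_nonneg (hy0 j).le (Real.exp_pos _).le
    _ = _ := by
        rw [Finset.prod_mul_distrib, Real.exp_sum]
        ring

theorem le_setIntegral_expDet (hc : 0 < c) (h : ExpDetBounds n c C)
    (hlg : ∀ i j, i < j → l j ≤ l i - g i) (hg : ∀ i, 0 < g i)
    (hy : StrictAnti y) (hy0 : ∀ i, 0 < y i) :
    c * (Real.exp (-(1 / 2)) * 4⁻¹) ^ n * pairProd (fun _ _ : Fin n => (4⁻¹ : ℝ)) *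
      (Real.exp (∑ i, l i * y i) * ((∏ j, min 1 (g j * y j)) *
          pairProd fun i j => min 1 ((l i - l j + min (g j) (y j)⁻¹) * (y i - y j)))) ≤
    ∫ t in Set.univ.pi fun i => Set.Ioo (l i - g i) (l i), (∏ j, y j) * expDet t y := by
  set Q := pairProd fun i j => min 1 ((l i - l j + min (g j) (y j)⁻¹) * (y i - y j)) with hQ
  set τ : Fin n → ℝ := fun j => min (g j) (y j)⁻¹ with hτ
  have hτ0 : ∀ j, 0 < τ j := fun j => lt_min (hg j) (inv_pos.2 (hy0 j))
  have hτg : ∀ j, τ j ≤ g j := fun j => min_le_left _ _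
  have hτy : ∀ j, τ j * y j = min 1 (g j * y j) := fun j => by
    rw [hτ, min_mul_of_nonneg _ _ (hy0 j).le, inv_mul_cancel₀ (hy0 j).ne', min_comm]
  have hQ0 : 0 < Q := pairProd_pos fun i j hij =>
    lt_min one_pos (mul_pos (by linarith [hlg i j hij, hg i, hτ0 j]) (sub_pos.2 (hy hij)))
  have hY : 0 < ∏ j, y j := Finset.prod_pos fun j _ => hy0 j
  have hbox : MeasurableSet (Set.univ.pi fun i => Set.Ioo (l i - g i) (l i)) :=
    MeasurableSet.univ_pi fun _ => measurableSet_Ioo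
  have hbox' : MeasurableSet (Set.univ.pi fun i => Set.Ioo (l i - τ i / 2) (l i - τ i / 4)) :=
    MeasurableSet.univ_pi fun _ => measurableSet_Ioo
  have hsub : (Set.univ.pi fun i => Set.Ioo (l i - τ i / 2) (l i - τ i / 4)) ⊆
      Set.univ.pi fun i => Set.Ioo (l i - g i) (l i) :=
    Set.pi_mono fun i _ => Set.Ioo_subset_Ioo (by linarith [hτ0 i, hτg i])
      (by linarith [hτ0 i])
  have hint : IntegrableOn (fun t => (∏ j, y j) * expDet t y)
      (Set.univ.pi fun i => Set.Ioo (l i - g i) (l i)) :=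
    integrableOn_pi_Ioo ((continuous_expDet y).const_mul _)
  have hP : ∀ t : Fin n → ℝ, StrictAnti t →
      0 < pairProd fun i j => min 1 ((t i - t j) * (y i - y j)) := fun t ht =>
    pairProd_pos fun i j hij =>
      lt_min one_pos (mul_pos (sub_pos.2 (ht hij)) (sub_pos.2 (hy hij)))
  calc _ = ∫ _ in Set.univ.pi fun i => Set.Ioo (l i - τ i / 2) (l i - τ i / 4),
          (∏ j, y j) * (c * ((∏ j, (Real.exp (-(1 / 2)) * Real.exp (l j * y j))) *
            (pairProd (fun _ _ : Fin n => (4⁻¹ : ℝ)) * Q))) := by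
        rw [setIntegral_const, Measure.real,
          Real.volume_pi_Ioo_toReal fun i => by linarith [hτ0 i], smul_eq_mul]
        have h1 : ∀ j, l j - τ j / 4 - (l j - τ j / 2) = τ j * 4⁻¹ := fun j => by ring
        simp only [h1, ← hτy, Finset.prod_mul_distrib, Finset.prod_const, Finset.card_univ,
          Fintype.card_fin, Real.exp_sum, mul_pow]
        ring
    _ ≤ ∫ t in Set.univ.pi fun i => Set.Ioo (l i - τ i / 2) (l i - τ i / 4),
          (∏ j, y j) * expDet t y := by
        refine setIntegral_mono_on (integrableOn_pi_Ioo continuous_const) (hint.mono_set hsub)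
          hbox' fun t ht => ?_
        have ht1 : ∀ i, t i ∈ Set.Ioo (l i - τ i / 2) (l i - τ i / 4) :=
          fun i => ht i (Set.mem_univ i)
        have hta := strictAnti_of_mem_box hlg fun i => hsub ht i (Set.mem_univ i)
        refine mul_le_mul_of_nonneg_left (le_trans ?_ (h t y hta hy).1) hY.le
        refine mul_le_mul_of_nonneg_left (mul_le_mul ?_ ?_ ?_ (Real.exp_pos _).le) hc.le
        · rw [Real.exp_sum]
          refine Finset.prod_le_prod (fun j _ => by positivity) fun j _ => ?_
          rw [← Real.exp_add]
          refine Real.exp_le_exp.2 ?_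
          have h1 : τ j * y j ≤ 1 := by rw [hτy]; exact min_le_left _ _
          nlinarith [(ht1 j).1, hy0 j]
        · rw [hQ, ← pairProd_mul]
          refine pairProd_le (fun i j hij => ?_) fun i j hij => ?_
          · exact mul_nonneg (by norm_num) (le_min zero_le_one (mul_nonneg
              (by linarith [hlg i j hij, hg i, hτ0 j]) (sub_nonneg.2 (hy hij).le)))
          · rw [inv_mul_le_iff₀ (by norm_num)]
            refine min_one_le_mul (by norm_num) ?_
            rw [← mul_assoc]
            refine mul_le_mul_of_nonneg_right ?_ (sub_nonneg.2 (hy hij).le)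
            have h1 : min (g j) (y j)⁻¹ = τ j := rfl
            rw [h1]
            linarith [(ht1 i).1, (ht1 j).2, hlg i j hij, hτg i, hg i]
        · exact mul_nonneg (pairProd_pos fun _ _ _ => by norm_num).le hQ0.le
    _ ≤ _ := by
        refine setIntegral_mono_set hint ?_ (Filter.Eventually.of_forall hsub)
        refine (ae_restrict_iff' hbox).2 (Filter.Eventually.of_forall fun t ht => ?_)
        have hta := strictAnti_of_mem_box hlg fun i => ht i (Set.mem_univ i)
        exact mul_nonneg hY.le (le_trans (mul_nonneg hc.le
          (mul_nonneg (Real.exp_pos _).le (hP t hta).le)) (h t y hta hy).1)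

end Interlacing

theorem exists_expDetBounds (n : ℕ) : ∃ c C : ℝ, 0 < c ∧ 0 < C ∧ ExpDetBounds n c C := by
  induction n with
  | zero => exact ⟨1, 1, one_pos, one_pos, fun lam x _ _ => by simp [expDet, pairProd]⟩
  | succ n ih =>
    obtain ⟨c, C, hc, hC, h⟩ := ih
    have hp : 0 < pairProd (fun _ _ : Fin n => (4⁻¹ : ℝ)) := pairProd_pos fun _ _ _ => by norm_num
    refine ⟨c * (Real.exp (-(1 / 2)) * 4⁻¹) ^ n * pairProd (fun _ _ : Fin n => (4⁻¹ : ℝ)) *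
      ((4 ^ n) ^ n)⁻¹, C * ((4 * (n + 1 : ℕ)) ^ (n + 1)) ^ n * 2 ^ n * (4 ^ n) ^ n,
      by positivity, by positivity, fun lam x hl hx => ?_⟩
    have hlg : ∀ i j : Fin n, i < j →
        lam j.castSucc ≤ lam i.castSucc - (lam i.castSucc - lam i.succ) := fun i j hij => by
      rw [sub_sub_cancel]
      exact hl.antitone (Fin.succ_le_castSucc_iff.2 hij)
    have hg : ∀ i : Fin n, 0 < lam i.castSucc - lam i.succ :=
      fun i => sub_pos.2 (hl Fin.castSucc_lt_succ)
    have hy : StrictAnti fun j : Fin n => x j.castSucc - x (Fin.last n) := fun i j hij =>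
      sub_lt_sub_right (hx (Fin.castSucc_lt_castSucc_iff.2 hij)) _
    have hy0 : ∀ j : Fin n, 0 < x j.castSucc - x (Fin.last n) :=
      fun j => sub_pos.2 (hx (Fin.castSucc_lt_last j))
    have hlo := le_setIntegral_expDet (l := fun j : Fin n => lam j.castSucc)
      (g := fun j => lam j.castSucc - lam j.succ) hc h hlg hg hy hy0
    have hup := setIntegral_expDet_le (l := fun j : Fin n => lam j.castSucc)
      (g := fun j => lam j.castSucc - lam j.succ) hC h hlg hg hy hy0
    simp only [sub_sub_cancel, sub_sub_sub_cancel_right] at hlo hup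
    rw [← interlacingBound] at hlo hup
    have hexp : Real.exp (∑ i, lam i * x i) = Real.exp (∑ i, lam i * x (Fin.last n)) *
        Real.exp (∑ i : Fin n, lam i.castSucc * (x i.castSucc - x (Fin.last n))) := by
      rw [← Real.exp_add, Fin.sum_univ_castSucc, Fin.sum_univ_castSucc, add_right_comm,
        ← Finset.sum_add_distrib]
      congr 3
      ext i
      ring
    rw [expDet_eq_integral hl, hexp]
    have e0 := Real.exp_pos (∑ i, lam i * x (Fin.last n))
    constructor
    · calc _ = Real.exp (∑ i, lam i * x (Fin.last n)) * (c * (Real.exp (-(1 / 2)) * 4⁻¹) ^ n *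
            pairProd (fun _ _ : Fin n => (4⁻¹ : ℝ)) *
            (Real.exp (∑ i : Fin n, lam i.castSucc * (x i.castSucc - x (Fin.last n))) *
              (((4 ^ n) ^ n)⁻¹ *
                pairProd fun i j => min 1 ((lam i - lam j) * (x i - x j))))) := by ring
        _ ≤ _ := by
          refine mul_le_mul_of_nonneg_left (le_trans ?_ hlo) e0.le
          gcongr
          rw [inv_mul_le_iff₀ (by positivity)]
          exact le_interlacingBound hl hx
    · calc _
        _ ≤ Real.exp (∑ i, lam i * x (Fin.last n)) *
          (C * ((4 * (n + 1 : ℕ)) ^ (n + 1)) ^ n * 2 ^ n *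
          (Real.exp (∑ i : Fin n, lam i.castSucc * (x i.castSucc - x (Fin.last n))) *
            ((4 ^ n) ^ n * pairProd fun i j => min 1 ((lam i - lam j) * (x i - x j))))) := by
          refine mul_le_mul_of_nonneg_left (hup.trans ?_) e0.le
          gcongr
          exact interlacingBound_le hl hx
        _ = _ := by ring

theorem altSum_eq_expDet {n : ℕ} (lam x : Fin n → ℝ) : altSum lam x = expDet lam x := by
  simp [altSum, expDet, Matrix.det_apply', Real.exp_sum]

theorem altSum_eq_zero {n : ℕ} {lam x : Fin n → ℝ} {i j : Fin n} (hij : i ≠ j)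
    (h : lam i = lam j ∨ x i = x j) : altSum lam x = 0 := by
  rw [altSum_eq_expDet, expDet]
  rcases h with h | h
  · exact Matrix.det_zero_of_row_eq hij (funext fun k => by simp [h])
  · exact Matrix.det_zero_of_column_eq hij fun k => by simp [h]

theorem pairProd_eq_zero {n : ℕ} {f : Fin n → Fin n → ℝ} {i j : Fin n} (hij : i < j)
    (h : f i j = 0) : pairProd f = 0 :=
  Finset.prod_eq_zero (Finset.mem_univ i) (Finset.prod_eq_zero (Finset.mem_Ioi.2 hij) h)

theorem exists_lt_eq_of_not_strictAnti {n : ℕ} {f : Fin n → ℝ} (hf : Antitone f)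
    (h : ¬StrictAnti f) : ∃ i j, i < j ∧ f i = f j := by
  simp only [StrictAnti, not_forall, not_lt] at h
  obtain ⟨i, j, hij, hle⟩ := h
  exact ⟨i, j, hij, le_antisymm hle (hf hij.le)⟩

theorem sinh_mul_exp_neg (t : ℝ) :
    Real.sinh t * Real.exp (-t) = (1 - Real.exp (-(2 * t))) / 2 := by
  rw [Real.sinh_eq, div_mul_eq_mul_div, sub_mul, ← Real.exp_add, ← Real.exp_add]
  simp only [add_neg_cancel, Real.exp_zero]
  ring_nf

theorem sinh_mul_exp_neg_mul_le {t : ℝ} (ht : 0 ≤ t) :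
    Real.sinh t * Real.exp (-t) * (1 + t) ≤ 2 * t := by
  rw [sinh_mul_exp_neg]
  have h1 := Real.add_one_le_exp (-(2 * t))
  have h2 := Real.exp_pos (-(2 * t))
  nlinarith

theorem le_sinh_mul_exp_neg_mul {t : ℝ} (ht : 0 ≤ t) :
    t ≤ 2 * (Real.sinh t * Real.exp (-t) * (1 + t)) := by
  rw [sinh_mul_exp_neg]
  have h1 := Real.add_one_le_exp (2 * t)
  have h3 : Real.exp (-(2 * t)) ≤ (1 + 2 * t)⁻¹ := by
    rw [Real.exp_neg]
    exact inv_anti₀ (by linarith) (by linarith)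
  have h4 : t ≤ (1 - (1 + 2 * t)⁻¹) * (1 + t) := by
    rw [show (1 - (1 + 2 * t)⁻¹) * (1 + t) = 2 * t * (1 + t) / (1 + 2 * t) by field_simp; ring,
      le_div_iff₀ (by linarith)]
    nlinarith
  nlinarith

theorem min_one_mul_one_add_le {a t : ℝ} (ha : 0 ≤ a) (ht : 0 ≤ t) :
    min 1 (a * t) * (1 + a * t) ≤
      4 * (a * (Real.sinh t * Real.exp (-t) * (1 + t))) := by
  have h1 := mul_le_mul_of_nonneg_left (le_sinh_mul_exp_neg_mul ht) ha
  have h0 := mul_nonneg ha ht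
  have h2 : min 1 (a * t) * (1 + a * t) ≤ 2 * (a * t) := by
    rcases min_cases 1 (a * t) with ⟨h, _⟩ | ⟨h, _⟩ <;> rw [h] <;> nlinarith
  linarith

theorem le_min_one_mul_one_add {a t : ℝ} (ha : 0 ≤ a) (ht : 0 ≤ t) :
    2⁻¹ * (a * (Real.sinh t * Real.exp (-t) * (1 + t))) ≤ min 1 (a * t) * (1 + a * t) := by
  have h1 := mul_le_mul_of_nonneg_left (sinh_mul_exp_neg_mul_le ht) ha
  have h0 := mul_nonneg ha ht
  have h2 : a * t ≤ min 1 (a * t) * (1 + a * t) := by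
    rcases min_cases 1 (a * t) with ⟨h, _⟩ | ⟨h, _⟩ <;> rw [h] <;> nlinarith
  linarith

theorem exp_neg_rhoSum {n : ℕ} (x : Fin n → ℝ) :
    Real.exp (-rhoSum x) = pairProd fun i j => Real.exp (-(x i - x j)) := by
  simp only [rhoSum, pairProd, ← Finset.sum_neg_distrib, Real.exp_sum]

/-- Sharp estimate for the Harish-Chandra spherical function of the curved complex
symmetric space of type `A_{n-1}`:
`A(λ,x) · ∏_{i<j}(1+(λ_i−λ_j)(x_i−x_j)) ≍ V(λ)·(∏_{i<j} sinh(x_i−x_j))·e^{⟨λ,x⟩−ρ(x)}·∏_{i<j}(1+x_i−x_j)`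
for weakly decreasing `λ, x`, with constants depending only on `n`. -/
theorem curved_spherical_estimate_An (n : ℕ) (hn : 1 ≤ n) :
    ∃ C₁ C₂ : ℝ, 0 < C₁ ∧ 0 < C₂ ∧
      ∀ lam x : Fin n → ℝ, Antitone lam → Antitone x →
        C₁ * (vand lam * (∏ i : Fin n, ∏ j ∈ Finset.Ioi i, Real.sinh (x i - x j)) *
              Real.exp ((∑ k, lam k * x k) - rhoSum x) *
              (∏ i : Fin n, ∏ j ∈ Finset.Ioi i, (1 + x i - x j))) ≤
            altSum lam x *
              (∏ i : Fin n, ∏ j ∈ Finset.Ioi i, (1 + (lam i - lam j) * (x i - x j))) ∧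
        altSum lam x *
              (∏ i : Fin n, ∏ j ∈ Finset.Ioi i, (1 + (lam i - lam j) * (x i - x j))) ≤
          C₂ * (vand lam * (∏ i : Fin n, ∏ j ∈ Finset.Ioi i, Real.sinh (x i - x j)) *
              Real.exp ((∑ k, lam k * x k) - rhoSum x) *
              (∏ i : Fin n, ∏ j ∈ Finset.Ioi i, (1 + x i - x j))) := by
  obtain ⟨c, C, hc, hC, h⟩ := exists_expDetBounds n
  have hp2 : 0 < pairProd (fun _ _ : Fin n => (2⁻¹ : ℝ)) := pairProd_pos fun _ _ _ => by norm_num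
  have hp4 : 0 < pairProd (fun _ _ : Fin n => (4 : ℝ)) := pairProd_pos fun _ _ _ => by norm_num
  refine ⟨c * pairProd (fun _ _ : Fin n => (2⁻¹ : ℝ)), C * pairProd (fun _ _ : Fin n => (4 : ℝ)),
    mul_pos hc hp2, mul_pos hC hp4, fun lam x hl hx => ?_⟩
  simp only [add_sub_assoc]
  change _ * (pairProd (fun i j => lam i - lam j) * pairProd (fun i j => Real.sinh (x i - x j)) * _ *
      pairProd (fun i j => 1 + (x i - x j))) ≤
      _ * pairProd (fun i j => 1 + (lam i - lam j) * (x i - x j)) ∧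
    _ * pairProd (fun i j => 1 + (lam i - lam j) * (x i - x j)) ≤
      _ * (pairProd (fun i j => lam i - lam j) * pairProd (fun i j => Real.sinh (x i - x j)) * _ *
      pairProd (fun i j => 1 + (x i - x j)))
  by_cases hl' : StrictAnti lam
  swap
  · obtain ⟨i, j, hij, heq⟩ := exists_lt_eq_of_not_strictAnti hl hl'
    rw [altSum_eq_zero hij.ne (Or.inl heq),
      pairProd_eq_zero (f := fun i j => lam i - lam j) hij (sub_eq_zero.2 heq)]
    simp
  by_cases hx' : StrictAnti x
  swap
  · obtain ⟨i, j, hij, heq⟩ := exists_lt_eq_of_not_strictAnti hx hx'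
    rw [altSum_eq_zero hij.ne (Or.inr heq),
      pairProd_eq_zero (f := fun i j => Real.sinh (x i - x j)) hij (by simp [heq])]
    simp
  obtain ⟨h1, h2⟩ := h lam x hl' hx'
  have hlam : ∀ i j, i < j → 0 ≤ lam i - lam j := fun i j hij => sub_nonneg.2 (hl hij.le)
  have hxx : ∀ i j, i < j → 0 ≤ x i - x j := fun i j hij => sub_nonneg.2 (hx hij.le)
  have hD : 0 < pairProd fun i j => 1 + (lam i - lam j) * (x i - x j) :=
    pairProd_pos fun i j hij => by have := mul_nonneg (hlam i j hij) (hxx i j hij); linarith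
  rw [altSum_eq_expDet, sub_eq_add_neg, Real.exp_add, exp_neg_rhoSum]
  have e0 := Real.exp_pos (∑ k, lam k * x k)
  have hlo := pairProd_le (n := n)
    (f := fun i j => 2⁻¹ * ((lam i - lam j) * (Real.sinh (x i - x j) *
      Real.exp (-(x i - x j)) * (1 + (x i - x j)))))
    (fun i j hij => by
      have h3 := Real.sinh_nonneg_iff.2 (hxx i j hij)
      have h4 := hxx i j hij
      have h5 := hlam i j hij
      positivity)
    fun i j hij => le_min_one_mul_one_add (hlam i j hij) (hxx i j hij)
  have hup := pairProd_le (n := n)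
    (f := fun i j => min 1 ((lam i - lam j) * (x i - x j)) *
      (1 + (lam i - lam j) * (x i - x j)))
    (fun i j hij => by
      have h4 := mul_nonneg (hlam i j hij) (hxx i j hij)
      positivity)
    fun i j hij => min_one_mul_one_add_le (hlam i j hij) (hxx i j hij)
  simp only [pairProd_mul] at hlo hup
  constructor
  · refine le_trans ?_ (mul_le_mul_of_nonneg_right h1 hD.le)
    have := mul_le_mul_of_nonneg_left hlo (mul_pos hc e0).le
    linarith
  · refine le_trans (mul_le_mul_of_nonneg_right h2 hD.le) ?_
    have := mul_le_mul_of_nonneg_left hup (mul_pos hC e0).le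
    linarith
end
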